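/- arXiv:2603.26484 — 4 statements merged into one kernel-verified Lean document; each statement's English description precedes it below -/
import Mathlib

section
/- For every d.c.e. real γ the following are equivalent: (i) γ is strongly d.c.e. 0-speedable; (ii) γ is d.c.e. speedable; (iii) γ is weakly d.c.e. speedable; (iv) γ is covered by some Solovay test (i.e., γ is not Martin-Löf random). -/
open Filter

/-- A computable approximation of a real `α`: a computable sequence of
rationals in `[0,1]` converging to `α`. -/
def IsCompApprox (a : ℕ → ℚ) (α : ℝ) : Prop :=
  Computable a ∧ (∀ s, a s ∈ Set.Icc (0 : ℚ) 1) ∧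
    Tendsto (fun s => (a s : ℝ)) atTop (nhds α)

/-- A d.c.e. approximation: a computable approximation with bounded variation. -/
def IsDCEApprox (a : ℕ → ℚ) (α : ℝ) : Prop :=
  IsCompApprox a α ∧ Summable (fun s => |(a (s + 1) : ℝ) - (a s : ℝ)|)

/-- A computable order: a nondecreasing unbounded computable function. -/
def IsComputableOrder (f : ℕ → ℕ) : Prop :=
  Computable f ∧ Monotone f ∧ Tendsto f atTop atTop

/-- The liminf (in the extended reals) of `|(α - a (f s)) / (α - a s)|`. -/
noncomputable def speedLiminf (a : ℕ → ℚ) (f : ℕ → ℕ) (α : ℝ) : EReal :=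
  Filter.liminf (fun s => ((|(α - (a (f s) : ℝ)) / (α - (a s : ℝ))| : ℝ) : EReal)) atTop

/-- A computable approximation `a` of `α` is `ρ`-speedable. -/
def IsRhoSpeedable (a : ℕ → ℚ) (α : ℝ) (ρ : ℚ) : Prop :=
  (∃ q : ℚ, α = (q : ℝ)) ∨
    ∃ f, IsComputableOrder f ∧ speedLiminf a f α ≤ (((ρ : ℝ) : EReal))

/-- A computable approximation is speedable if it is `ρ`-speedable for some rational
`ρ ∈ [0,1)`. -/
def IsSpeedable (a : ℕ → ℚ) (α : ℝ) : Prop :=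
  ∃ ρ : ℚ, 0 ≤ ρ ∧ ρ < 1 ∧ IsRhoSpeedable a α ρ

/-- A Solovay test: computable sequences of rationals `l i ≤ r i` in `[0,1]`
with `Σ (r i - l i) < ∞`. -/
structure SolovayTest where
  l : ℕ → ℚ
  r : ℕ → ℚ
  comp_l : Computable l
  comp_r : Computable r
  mem_l : ∀ i, l i ∈ Set.Icc (0 : ℚ) 1
  mem_r : ∀ i, r i ∈ Set.Icc (0 : ℚ) 1
  le : ∀ i, l i ≤ r i
  summable : Summable (fun i => (r i : ℝ) - (l i : ℝ))

/-- A real `γ` is covered by a Solovay test if `γ ∈ [l i, r i]` for infinitely many `i`. -/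
def SolovayTest.Covers (T : SolovayTest) (γ : ℝ) : Prop :=
  ∃ᶠ i in atTop, γ ∈ Set.Icc (T.l i : ℝ) (T.r i : ℝ)

/-- The sequence of endpoints `l 0, r 0, l 1, r 1, …` of a Solovay test. -/
def SolovayTest.endpoints (T : SolovayTest) (n : ℕ) : ℚ :=
  if n % 2 = 0 then T.l (n / 2) else T.r (n / 2)

/-- A real is strongly d.c.e. 0-speedable: it has a d.c.e. approximation that is
0-speedable via the function `s ↦ s + 1`. -/
def StronglyDCEZeroSpeedable (γ : ℝ) : Prop :=
  ∃ c : ℕ → ℚ, IsDCEApprox c γ ∧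
    ((∃ q : ℚ, γ = (q : ℝ)) ∨ speedLiminf c (fun s => s + 1) γ ≤ (0 : EReal))

/-- A real is d.c.e. speedable: it has a speedable d.c.e. approximation. -/
def DCESpeedable (γ : ℝ) : Prop :=
  ∃ a : ℕ → ℚ, IsDCEApprox a γ ∧ IsSpeedable a γ

/-- A real is weakly d.c.e. speedable. -/
def WeaklyDCESpeedable (γ : ℝ) : Prop :=
  ∃ ρ : ℚ, 0 < ρ ∧ ρ < 1 ∧
    ∃ a b : ℕ → ℚ, IsDCEApprox a γ ∧ IsDCEApprox b γ ∧
      Filter.liminf (fun s => ((|(γ - (b s : ℝ)) / (γ - (a s : ℝ))| : ℝ) : EReal)) atTop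
        ≤ (((ρ : ℝ) : EReal))

/-! Part 1: computability of rational arithmetic -/

def rcode (q : ℚ) : ℕ := @Encodable.encode ℚ Rat.instEncodable q

theorem rcode_eq (q : ℚ) : rcode q = Nat.pair (Encodable.encode q.num) q.den := rfl

theorem rcode_inj {p q : ℚ} (h : rcode p = rcode q) : p = q :=
  @Encodable.encode_injective ℚ Rat.instEncodable _ _ h

def RR (y : ℕ) : Prop := 0 < y.unpair.2 ∧ Nat.Coprime ((y.unpair.1 + 1) / 2) y.unpair.2

instance : DecidablePred RR := fun y => by unfold RR; infer_instance

theorem int_natAbs_code (z : ℤ) : z.natAbs = (Encodable.encode z + 1) / 2 := by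
  cases z with
  | ofNat n => 
    have : Encodable.encode (Int.ofNat n) = 2 * n := rfl
    rw [this]; simp; omega
  | negSucc n =>
    have : Encodable.encode (Int.negSucc n) = 2 * n + 1 := rfl
    rw [this]; simp; omega

theorem RR_iff (y : ℕ) : RR y ↔ y ∈ Set.range (@Encodable.encode ℚ Rat.instEncodable) := by
  constructor
  · rintro ⟨h1, h2⟩
    have hz := Denumerable.encode_ofNat (α := ℤ) y.unpair.1
    refine ⟨⟨Denumerable.ofNat ℤ y.unpair.1, y.unpair.2, h1.ne', ?_⟩, ?_⟩
    · rw [int_natAbs_code, hz]; exact h2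
    · change rcode _ = _
      rw [rcode_eq]
      simp only [hz, Nat.pair_unpair]
  · rintro ⟨q, rfl⟩
    change RR (rcode q)
    rw [rcode_eq]
    unfold RR
    simp only [Nat.unpair_pair]
    refine ⟨q.den_pos, ?_⟩
    rw [← int_natAbs_code]
    exact q.reduced

theorem RR_inf (y : ℕ) : ∃ m, RR (y + m + 1) := by
  have : ∃ q : ℚ, rcode q = Nat.pair (y+1) 1 := by
    have := (RR_iff (Nat.pair (y+1) 1)).1 ⟨by simp, by simp⟩
    exact this
  obtain ⟨q, hq⟩ := this
  have h2 := Nat.left_le_pair (y+1) 1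
  refine ⟨Nat.pair (y+1) 1 - (y+1), ?_⟩
  have : y + (Nat.pair (y+1) 1 - (y+1)) + 1 = Nat.pair (y+1) 1 := by omega
  rw [this, RR_iff]
  exact ⟨q, hq⟩

theorem code_ofNat_zero : ∃ c : ℕ, rcode (Denumerable.ofNat ℚ 0) = c := ⟨_, rfl⟩

theorem code_ofNat_succ (n : ℕ) : rcode (Denumerable.ofNat ℚ (n+1)) =
    rcode (Denumerable.ofNat ℚ n) + Nat.find (RR_inf (rcode (Denumerable.ofNat ℚ n))) + 1 := by
  let := @Encodable.decidableRangeEncode ℚ Rat.instEncodable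
  let : Infinite (Set.range (@Encodable.encode ℚ Rat.instEncodable)) :=
    Infinite.of_injective _ (Equiv.ofInjective _ (@Encodable.encode_injective ℚ Rat.instEncodable)).injective
  have key : ∀ n, rcode (Denumerable.ofNat ℚ n) =
      (Nat.Subtype.ofNat (Set.range (@Encodable.encode ℚ Rat.instEncodable)) n : ℕ) := by
    intro n
    have : Denumerable.ofNat ℚ n = (@Encodable.equivRangeEncode ℚ Rat.instEncodable).symm
      (Nat.Subtype.ofNat (Set.range (@Encodable.encode ℚ Rat.instEncodable)) n) := by
      unfold Rat.instDenumerable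
      unfold Denumerable.ofEncodableOfInfinite
      simp only [Denumerable.ofEquiv_ofNat]
      rfl
    rw [this]
    have h2 := (@Encodable.equivRangeEncode ℚ Rat.instEncodable).apply_symm_apply
      (Nat.Subtype.ofNat (Set.range (@Encodable.encode ℚ Rat.instEncodable)) n)
    exact congrArg Subtype.val h2
  rw [key (n+1)]
  change ((Nat.Subtype.succ (Nat.Subtype.ofNat (Set.range (@Encodable.encode ℚ Rat.instEncodable)) n) : _) : ℕ) = _
  unfold Nat.Subtype.succ
  simp only
  have e : ∀ y z (hy : ∃ m, y + m + 1 ∈ Set.range (@Encodable.encode ℚ Rat.instEncodable)) (hz : ∃ m, RR (z + m + 1)),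
      y = z → y + Nat.find hy + 1 = z + Nat.find hz + 1 := by
    rintro y z hy hz rfl
    congr 2
    apply Nat.find_congr'
    intro m
    exact (RR_iff _).symm
  exact e _ _ _ _ (key n).symm

theorem primrec_RR : PrimrecPred RR := by
  have hd : PrimrecRel fun (k : ℕ) (p : ℕ × ℕ) => ¬ (p.1 % k = 0 ∧ p.2 % k = 0 ∧ 1 < k) := by
    apply PrimrecPred.not
    apply PrimrecPred.and
    · exact Primrec.eq.comp (Primrec.nat_mod.comp (Primrec.fst.comp Primrec.snd) Primrec.fst) (Primrec.const 0)
    apply PrimrecPred.and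
    · exact Primrec.eq.comp (Primrec.nat_mod.comp (Primrec.snd.comp Primrec.snd) Primrec.fst) (Primrec.const 0)
    · exact Primrec.nat_lt.comp (Primrec.const 1) Primrec.fst
  have h1 := PrimrecRel.forall_mem_list (R := fun (k : ℕ) (p : ℕ × ℕ) => ¬ (p.1 % k = 0 ∧ p.2 % k = 0 ∧ 1 < k)) hd
  have h2 : PrimrecPred fun y : ℕ => 0 < y.unpair.2 ∧
      ∀ k ∈ List.range (y.unpair.2 + 1), ¬ (((y.unpair.1 + 1)/2) % k = 0 ∧ y.unpair.2 % k = 0 ∧ 1 < k) := by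
    apply PrimrecPred.and
    · exact Primrec.nat_lt.comp (Primrec.const 0) (Primrec.snd.comp Primrec.unpair)
    · exact PrimrecRel.comp h1 (Primrec.list_range.comp (Primrec.succ.comp (Primrec.snd.comp Primrec.unpair)))
        (Primrec.pair (Primrec.nat_div.comp (Primrec.succ.comp (Primrec.fst.comp Primrec.unpair)) (Primrec.const 2))
          (Primrec.snd.comp Primrec.unpair))
  refine h2.of_eq fun y => ?_
  unfold RR
  refine and_congr_right fun hpos => ?_
  constructor
  · intro h
    by_contra hc
    have hg := Nat.gcd_pos_of_pos_right ((y.unpair.1 + 1)/2) hpos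
    refine h (Nat.gcd ((y.unpair.1 + 1)/2) y.unpair.2) ?_ ⟨?_, ?_, ?_⟩
    · exact List.mem_range.2 <| Nat.lt_succ_of_le (Nat.gcd_le_right _ hpos)
    · exact Nat.mod_eq_zero_of_dvd (Nat.gcd_dvd_left _ _)
    · exact Nat.mod_eq_zero_of_dvd (Nat.gcd_dvd_right _ _)
    · unfold Nat.Coprime at hc; omega
  · rintro h k hk ⟨h1, h2, h3⟩
    have := Nat.dvd_gcd (Nat.dvd_of_mod_eq_zero h1) (Nat.dvd_of_mod_eq_zero h2)
    rw [h] at this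
    have := Nat.le_of_dvd one_pos this
    omega

theorem comp_next : Computable fun y : ℕ => Nat.find (RR_inf y) := by
  refine Computable.find (P := fun y m => RR (y + m + 1)) ?_ RR_inf
  have : PrimrecPred fun p : ℕ × ℕ => RR (p.1 + p.2 + 1) :=
    primrec_RR.comp (Primrec.succ.comp Primrec.nat_add)
  exact this.computablePred

theorem comp_rcode : Computable rcode := by
  have h : Computable fun n : ℕ => rcode (Denumerable.ofNat ℚ n) := by
    have h2 : Computable fun n : ℕ => (Nat.rec (rcode (Denumerable.ofNat ℚ 0))
        (fun _ y => y + Nat.find (RR_inf y) + 1) n : ℕ) := by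
      refine Computable.nat_rec (h := fun _ p => p.2 + Nat.find (RR_inf p.2) + 1) Computable.id (Computable.const _) ?_
      have h3 : Computable fun y : ℕ => y + Nat.find (RR_inf y) + 1 :=
        Computable.succ.comp (Primrec.nat_add.to_comp.comp Computable.id comp_next)
      exact h3.comp (Computable.snd.comp Computable.snd)
    refine h2.of_eq fun n => ?_
    induction n with
    | zero => rfl
    | succ n ih => rw [code_ofNat_succ, ← ih]
  have := h.comp (Computable.encode (α := ℚ))
  exact this.of_eq fun q => by rw [Denumerable.ofNat_encode]

def rP (q : ℚ) : ℕ := q.num.toNat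
def rQ (q : ℚ) : ℕ := (-q.num).toNat

theorem comp_den : Computable (fun q : ℚ => q.den) := by
  refine ((Computable.snd.comp Computable.unpair).comp comp_rcode).of_eq fun q => ?_
  rw [rcode_eq]; simp

theorem comp_numcode : Computable (fun q : ℚ => (Encodable.encode q.num : ℕ)) := by
  refine ((Computable.fst.comp Computable.unpair).comp comp_rcode).of_eq fun q => ?_
  rw [rcode_eq]; simp

theorem comp_rP : Computable rP := by
  have : Primrec fun z : ℕ => if z % 2 = 0 then z / 2 else 0 :=
    Primrec.ite (Primrec.eq.comp (Primrec.nat_mod.comp Primrec.id (Primrec.const 2)) (Primrec.const 0))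
      (Primrec.nat_div.comp Primrec.id (Primrec.const 2)) (Primrec.const 0)
  refine (this.to_comp.comp comp_numcode).of_eq fun q => ?_
  unfold rP
  cases q.num with
  | ofNat n => 
    have : Encodable.encode (Int.ofNat n) = 2 * n := rfl
    rw [this]; simp
  | negSucc n =>
    have : Encodable.encode (Int.negSucc n) = 2 * n + 1 := rfl
    rw [this]; simp; try omega

theorem comp_rQ : Computable rQ := by
  have : Primrec fun z : ℕ => if z % 2 = 0 then 0 else (z + 1) / 2 :=
    Primrec.ite (Primrec.eq.comp (Primrec.nat_mod.comp Primrec.id (Primrec.const 2)) (Primrec.const 0))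
      (Primrec.const 0) (Primrec.nat_div.comp Primrec.succ (Primrec.const 2))
  refine (this.to_comp.comp comp_numcode).of_eq fun q => ?_
  unfold rQ
  cases q.num with
  | ofNat n => 
    have : Encodable.encode (Int.ofNat n) = 2 * n := rfl
    rw [this]; simp
  | negSucc n =>
    have : Encodable.encode (Int.negSucc n) = 2 * n + 1 := rfl
    rw [this]; simp; omega

theorem rat_rep (q : ℚ) : q * q.den = rP q - rQ q := by
  have h : ((rP q : ℤ) - rQ q) = q.num := by unfold rP rQ; omega
  have h' : (rP q : ℚ) - rQ q = q.num := by exact_mod_cast h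
  rw [h']; exact Rat.mul_den_eq_num q

theorem comp_mk3 : Computable fun t : ℕ × ℕ × ℕ => ((t.1 : ℚ) - t.2.1) / t.2.2 := by
  let P : ℕ × ℕ × ℕ → ℕ → Prop := fun t n =>
    if t.2.2 = 0 then rP (Denumerable.ofNat ℚ n) + rQ (Denumerable.ofNat ℚ n) = 0 else
      rP (Denumerable.ofNat ℚ n) * t.2.2 + t.2.1 * (Denumerable.ofNat ℚ n).den =
      t.1 * (Denumerable.ofNat ℚ n).den + rQ (Denumerable.ofNat ℚ n) * t.2.2
  have : DecidableRel P := fun t n => by unfold P; infer_instance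
  have hiff : ∀ t n, P t n ↔ Denumerable.ofNat ℚ n = ((t.1 : ℚ) - t.2.1) / t.2.2 := by
    rintro ⟨a, b, c⟩ n
    simp only [P]
    split_ifs with h
    · subst h
      simp only [Nat.cast_zero, div_zero]
      constructor
      · intro h
        have hq := rat_rep (Denumerable.ofNat ℚ n)
        have h1 : rP (Denumerable.ofNat ℚ n) = 0 := by omega
        have h2 : rQ (Denumerable.ofNat ℚ n) = 0 := by omega
        rw [h1, h2] at hq
        simpa using hq
      · intro h; rw [h]; rfl
    · have hc : (c : ℚ) ≠ 0 := by exact_mod_cast h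
      rw [eq_div_iff hc]
      set q := Denumerable.ofNat ℚ n
      have hq := rat_rep q
      have hd : (q.den : ℚ) ≠ 0 := by exact_mod_cast q.den_nz
      constructor
      · intro h
        have h' : (rP q : ℚ) * c + b * q.den = a * q.den + rQ q * c := by exact_mod_cast h
        apply mul_right_cancel₀ hd
        linear_combination c * hq + h'
      · intro h
        have h' : (rP q : ℚ) * c + b * q.den = a * q.den + rQ q * c := by
          linear_combination (-c : ℚ) * hq + q.den * h
        exact_mod_cast h'
  have hex : ∀ t, ∃ n, P t n := fun t => ⟨@Encodable.encode ℚ Denumerable.toEncodable (((t.1 : ℚ) - t.2.1) / t.2.2), by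
    rw [hiff]; exact Denumerable.ofNat_encode _⟩
  have hP : ComputablePred fun p : (ℕ × ℕ × ℕ) × ℕ => P p.1 p.2 := by
    refine ⟨fun p => by infer_instance, ?_⟩
    have hq : Computable fun p : (ℕ × ℕ × ℕ) × ℕ => Denumerable.ofNat ℚ p.2 := (Computable.ofNat ℚ).comp Computable.snd
    have ht : Computable fun p : (ℕ × ℕ × ℕ) × ℕ => p.1 := Computable.fst
    have h1 : Computable fun p : (ℕ × ℕ × ℕ) × ℕ => (bif decide (p.1.2.2 = 0) then decide (rP (Denumerable.ofNat ℚ p.2) + rQ (Denumerable.ofNat ℚ p.2) = 0) else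
       decide (rP (Denumerable.ofNat ℚ p.2) * p.1.2.2 + p.1.2.1 * (Denumerable.ofNat ℚ p.2).den =
      p.1.1 * (Denumerable.ofNat ℚ p.2).den + rQ (Denumerable.ofNat ℚ p.2) * p.1.2.2)) := by
      have hb : Computable fun p : (ℕ × ℕ × ℕ) × ℕ => p.1.2.1 := Computable.fst.comp (Computable.snd.comp ht)
      have hc : Computable fun p : (ℕ × ℕ × ℕ) × ℕ => p.1.2.2 := Computable.snd.comp (Computable.snd.comp ht)
      have ha : Computable fun p : (ℕ × ℕ × ℕ) × ℕ => p.1.1 := Computable.fst.comp ht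
      have heq : Computable₂ fun a b : ℕ => decide (a = b) := Primrec.eq.decide.to_comp
      have hmul := Primrec.nat_mul.to_comp
      have hadd := Primrec.nat_add.to_comp
      apply Computable.cond
      · exact heq.comp hc (Computable.const 0)
      · exact heq.comp (hadd.comp (comp_rP.comp hq) (comp_rQ.comp hq)) (Computable.const 0)
      · exact heq.comp (hadd.comp (hmul.comp (comp_rP.comp hq) hc) (hmul.comp hb (comp_den.comp hq)))
          (hadd.comp (hmul.comp ha (comp_den.comp hq)) (hmul.comp (comp_rQ.comp hq) hc))
    refine h1.of_eq fun p => ?_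
    by_cases h : p.1.2.2 = 0
    · simp [P, h]
    · simp [P, h]
  have := (Computable.ofNat ℚ).comp (Computable.find hP hex)
  refine this.of_eq fun t => ?_
  exact (hiff _ _).1 (Nat.find_spec (hex t))

section
variable {α : Type*} [Primcodable α]

theorem cadd {f g : α → ℕ} (hf : Computable f) (hg : Computable g) : Computable fun a => f a + g a :=
  Primrec.nat_add.to_comp.comp hf hg
theorem cmul {f g : α → ℕ} (hf : Computable f) (hg : Computable g) : Computable fun a => f a * g a :=
  Primrec.nat_mul.to_comp.comp hf hg
theorem csub {f g : α → ℕ} (hf : Computable f) (hg : Computable g) : Computable fun a => f a - g a :=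
  Primrec.nat_sub.to_comp.comp hf hg

theorem cmk {f g h : α → ℕ} (hf : Computable f) (hg : Computable g) (hh : Computable h) :
    Computable fun a => ((f a : ℚ) - g a) / h a :=
  Computable.comp (f := fun t : ℕ × ℕ × ℕ => ((t.1 : ℚ) - t.2.1) / t.2.2) (g := fun a => (f a, g a, h a))
    comp_mk3 (hf.pair (hg.pair hh))

theorem rcadd {f g : α → ℚ} (hf : Computable f) (hg : Computable g) : Computable fun a => f a + g a := by
  have h := cmk (cadd (cmul (comp_rP.comp hf) (comp_den.comp hg)) (cmul (comp_rP.comp hg) (comp_den.comp hf)))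
   (cadd (cmul (comp_rQ.comp hf) (comp_den.comp hg)) (cmul (comp_rQ.comp hg) (comp_den.comp hf)))
   (cmul (comp_den.comp hf) (comp_den.comp hg))
  refine h.of_eq fun a => ?_
  have h1 := rat_rep (f a)
  have h2 := rat_rep (g a)
  have d1 : ((f a).den : ℚ) ≠ 0 := by exact_mod_cast (f a).den_nz
  have d2 : ((g a).den : ℚ) ≠ 0 := by exact_mod_cast (g a).den_nz
  push_cast
  rw [div_eq_iff (mul_ne_zero d1 d2)]
  linear_combination -((g a).den : ℚ) * h1 - ((f a).den : ℚ) * h2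

theorem rcmul {f g : α → ℚ} (hf : Computable f) (hg : Computable g) : Computable fun a => f a * g a := by
  have h := cmk (cadd (cmul (comp_rP.comp hf) (comp_rP.comp hg)) (cmul (comp_rQ.comp hf) (comp_rQ.comp hg)))
   (cadd (cmul (comp_rP.comp hf) (comp_rQ.comp hg)) (cmul (comp_rQ.comp hf) (comp_rP.comp hg)))
   (cmul (comp_den.comp hf) (comp_den.comp hg))
  refine h.of_eq fun a => ?_
  have h1 := rat_rep (f a)
  have h2 := rat_rep (g a)
  have d1 : ((f a).den : ℚ) ≠ 0 := by exact_mod_cast (f a).den_nz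
  have d2 : ((g a).den : ℚ) ≠ 0 := by exact_mod_cast (g a).den_nz
  push_cast
  rw [div_eq_iff (mul_ne_zero d1 d2)]
  linear_combination -((g a * (g a).den : ℚ)) * h1 - ((rP (f a) - rQ (f a) : ℚ)) * h2

theorem rcsub {f g : α → ℚ} (hf : Computable f) (hg : Computable g) : Computable fun a => f a - g a :=
  (rcadd hf (rcmul (Computable.const (-1)) hg)).of_eq fun a => by ring

theorem rcnat {f : α → ℕ} (hf : Computable f) : Computable fun a => (f a : ℚ) :=
  (cmk hf (Computable.const 0) (Computable.const 1)).of_eq fun a => by simp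

theorem rcinvnat {f : α → ℕ} (hf : Computable f) : Computable fun a => 1 / (f a : ℚ) :=
  (cmk (Computable.const 1) (Computable.const 0) hf).of_eq fun a => by simp

theorem rcle {f g : α → ℚ} (hf : Computable f) (hg : Computable g) :
    Computable fun a => decide (f a ≤ g a) := by
  have hle : Computable₂ fun a b : ℕ => decide (a ≤ b) := Primrec.nat_le.decide.to_comp
  have h := hle.comp (cadd (cmul (comp_rP.comp hf) (comp_den.comp hg)) (cmul (comp_rQ.comp hg) (comp_den.comp hf)))
    (cadd (cmul (comp_rP.comp hg) (comp_den.comp hf)) (cmul (comp_rQ.comp hf) (comp_den.comp hg)))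
  refine h.of_eq fun a => ?_
  rw [decide_eq_decide]
  have h1 := rat_rep (f a)
  have h2 := rat_rep (g a)
  have d1 : (0 : ℚ) < ((f a).den : ℚ) := by exact_mod_cast (f a).den_pos
  have d2 : (0 : ℚ) < ((g a).den : ℚ) := by exact_mod_cast (g a).den_pos
  rw [← Nat.cast_le (α := ℚ)]
  push_cast
  rw [← mul_le_mul_iff_of_pos_right (b := f a) (mul_pos d1 d2)]
  have e1 : f a * ((f a).den * (g a).den) = (rP (f a) - rQ (f a)) * (g a).den := by rw [← h1]; ring
  have e2 : g a * ((f a).den * (g a).den) = (rP (g a) - rQ (g a)) * (f a).den := by rw [← h2]; ring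
  rw [e1, e2]
  constructor <;> intro h <;> linarith

theorem cite {p : α → Prop} [DecidablePred p] {β : Type*} [Primcodable β] {f g : α → β}
    (hp : Computable fun a => decide (p a)) (hf : Computable f)
    (hg : Computable g) : Computable fun a => if p a then f a else g a :=
  (Computable.cond hp hf hg).of_eq fun a => by by_cases h : p a <;> simp [h]

theorem rcmax {f g : α → ℚ} (hf : Computable f) (hg : Computable g) : Computable fun a => max (f a) (g a) :=
  (cite (rcle hf hg) hg hf).of_eq fun a => by rw [max_def]
theorem rcmin {f g : α → ℚ} (hf : Computable f) (hg : Computable g) : Computable fun a => min (f a) (g a) :=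
  (cite (rcle hf hg) hf hg).of_eq fun a => by rw [min_def]

theorem cpow2 {f : α → ℕ} (hf : Computable f) : Computable fun a => 2 ^ (f a) := by
  have : Computable fun n : ℕ => (2 ^ n : ℕ) := by
    refine (Computable.nat_rec (f := fun n : ℕ => n) (g := fun _ => 1) (h := fun _ p => p.2 * 2) Computable.id (Computable.const 1) ?_).of_eq fun n => ?_
    · exact cmul (Computable.snd.comp Computable.snd) (Computable.const 2)
    · induction n with
      | zero => rfl
      | succ n ih => rw [pow_succ, ← ih]
  exact this.comp hf
end
/-! Part 2: tests, and the easy implications -/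

theorem summable_var_comp {a : ℕ → ℝ} (h : Summable fun s => |a (s+1) - a s|) {f : ℕ → ℕ} (hf : Monotone f) :
    Summable fun s => |a (f (s+1)) - a (f s)| := by
  refine summable_of_sum_range_le (c := ∑' s, |a (s+1) - a s|) (fun _ => abs_nonneg _) fun n => ?_
  have h1 : ∑ i ∈ Finset.range n, |a (f (i+1)) - a (f i)| ≤ ∑ i ∈ Finset.Ico (f 0) (f n), |a (i+1) - a i| := by
    induction n with
    | zero => simp
    | succ n ih =>
      rw [Finset.sum_range_succ, ← Finset.sum_Ico_consecutive _ (hf (Nat.zero_le n)) (hf (Nat.le_succ n))]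
      refine add_le_add ih ?_
      have := dist_le_Ico_sum_dist a (hf (Nat.le_succ n))
      simp only [Real.dist_eq] at this
      rw [abs_sub_comm]
      refine this.trans (le_of_eq (Finset.sum_congr rfl fun i _ => abs_sub_comm _ _))
  exact h1.trans (h.sum_le_tsum _ fun _ _ => abs_nonneg _)

theorem exists_test {γ : ℝ} (hγ : γ ∈ Set.Ioo (0:ℝ) 1) {l r : ℕ → ℚ} (hl : Computable l) (hr : Computable r)
    (hle : ∀ i, l i ≤ r i) (hs : Summable fun i => (r i : ℝ) - l i)
    (hc : ∃ᶠ i in atTop, γ ∈ Set.Icc (l i : ℝ) (r i : ℝ)) : ∃ T : SolovayTest, T.Covers γ := by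
  refine ⟨⟨fun i => max 0 (min 1 (l i)), fun i => max 0 (min 1 (r i)),
    rcmax (Computable.const _) (rcmin (Computable.const _) hl),
    rcmax (Computable.const _) (rcmin (Computable.const _) hr),
    fun i => ⟨le_max_left _ _, max_le zero_le_one (min_le_left _ _)⟩,
    fun i => ⟨le_max_left _ _, max_le zero_le_one (min_le_left _ _)⟩,
    fun i => max_le_max_left _ (min_le_min_left _ (hle i)), ?_⟩, ?_⟩
  · refine Summable.of_nonneg_of_le (fun i => ?_) (fun i => ?_) hs
    · have : max 0 (min 1 (l i)) ≤ max 0 (min 1 (r i)) := max_le_max_left _ (min_le_min_left _ (hle i))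
      have : ((max 0 (min 1 (l i)) : ℚ) : ℝ) ≤ ((max 0 (min 1 (r i)) : ℚ) : ℝ) := by exact_mod_cast this
      linarith
    · have : max 0 (min 1 (r i)) - max 0 (min 1 (l i)) ≤ r i - l i := by
        have := hle i
        rcases max_cases 0 (min 1 (r i)) with h | h <;> rcases max_cases 0 (min 1 (l i)) with h' | h' <;>
        rcases min_cases 1 (r i) with h2 | h2 <;> rcases min_cases 1 (l i) with h3 | h3 <;> linarith
      exact_mod_cast this
  · refine hc.mono fun i hi => ?_
    obtain ⟨h1, h2⟩ := hi
    obtain ⟨g1, g2⟩ := hγ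
    constructor
    · push_cast
      exact max_le g1.le ((min_le_right _ _).trans h1)
    · push_cast
      exact le_max_of_le_right (le_min g2.le h2)

theorem rat_test {γ : ℝ} (hγ : γ ∈ Set.Ioo (0:ℝ) 1) {q : ℚ} (h : γ = q) : ∃ T : SolovayTest, T.Covers γ := by
  refine exists_test hγ (Computable.const q) (Computable.const q) (fun _ => le_rfl) (by simpa using summable_zero) ?_
  refine Filter.Frequently.of_forall fun i => ?_
  simp [h]

theorem sign_lemma {γ : ℝ} (hγ : γ ∈ Set.Ioo (0:ℝ) 1) {w : ℕ → ℚ} (hw : Computable w)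
    (hs : Summable fun s => |(w (s+1) : ℝ) - w s|) (hno : ¬ ∃ T : SolovayTest, T.Covers γ) :
    (∀ᶠ s in atTop, (w s : ℝ) < γ) ∨ (∀ᶠ s in atTop, γ < (w s : ℝ)) := by
  by_contra hcon
  push Not at hcon
  obtain ⟨h1, h2⟩ := hcon
  apply hno
  have hw1 : Computable fun s => w (s+1) := hw.comp Computable.succ
  refine exists_test hγ (l := fun s => min (w s) (w (s+1))) (r := fun s => max (w s) (w (s+1)))
    (rcmin hw hw1) (rcmax hw hw1) (fun _ => min_le_max) ?_ ?_
  · refine hs.congr fun s => ?_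
    push_cast
    rw [max_sub_min_eq_abs]
  · rw [Filter.frequently_atTop] at *
    intro N
    by_contra hc
    push Not at hc
    obtain ⟨s, hs1, hs2⟩ := h2 N
    obtain ⟨t, ht1, ht2⟩ := h1 (s+1)
    have : ∀ k, (w (s+1+k) : ℝ) < γ := by
      have step : ∀ i ≥ N, (w i : ℝ) ≤ γ → (w (i+1) : ℝ) < γ := by
        intro i hi hwi
        by_contra hlt
        apply hc i hi
        push_cast
        exact ⟨min_le_of_left_le hwi, le_max_of_le_right (not_lt.1 hlt)⟩
      intro k
      induction k with
      | zero => exact step s hs1 hs2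
      | succ k ih => exact step (s+1+k) (by omega) ih.le
    have h3 := this (t - (s+1))
    rw [Nat.add_sub_cancel' ht1] at h3
    exact absurd ht2 (not_le.2 h3)

theorem summable_lin {a b : ℕ → ℚ} (ha : Summable fun s => |(a (s+1) : ℝ) - a s|)
    (hb : Summable fun s => |(b (s+1) : ℝ) - b s|) (p q : ℚ) :
    Summable fun s => |((p * a (s+1) + q * b (s+1) : ℚ) : ℝ) - ((p * a s + q * b s : ℚ) : ℝ)| := by
  refine Summable.of_nonneg_of_le (fun _ => abs_nonneg _) (fun s => ?_) ((ha.mul_left |(p:ℝ)|).add (hb.mul_left |(q:ℝ)|))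
  push_cast
  rw [← abs_mul, ← abs_mul]
  refine le_trans (le_of_eq ?_) (abs_add_le _ _)
  congr 1; ring

theorem three_four {γ : ℝ} (hγ : γ ∈ Set.Ioo (0:ℝ) 1) (h : WeaklyDCESpeedable γ) :
    ∃ T : SolovayTest, T.Covers γ := by
  by_contra hno
  obtain ⟨ρ, hρ0, hρ1, a, b, ⟨⟨ca, ma, ta⟩, va⟩, ⟨⟨cb, mb, tb⟩, vb⟩, hlim⟩ := h
  have hirr : ∀ q : ℚ, γ ≠ q := fun q hq => hno (rat_test hγ hq)
  obtain ⟨σ, hσ1, hσ2⟩ := exists_between hρ1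
  have hσ0 : 0 < σ := hρ0.trans hσ1
  have hσ0r : (0:ℝ) < σ := by exact_mod_cast hσ0
  have hσ1r : (σ:ℝ) < 1 := by exact_mod_cast hσ2
  have hfreq : ∃ᶠ s in atTop, |γ - b s| < σ * |γ - a s| := by
    have h1 : Filter.liminf (fun s => ((|(γ - (b s : ℝ)) / (γ - (a s : ℝ))| : ℝ) : EReal)) atTop < ((σ : ℝ) : EReal) := by
      refine lt_of_le_of_lt hlim ?_
      exact_mod_cast hσ1
    refine (Filter.frequently_lt_of_liminf_lt (by isBoundedDefault) h1).mono fun s hs => ?_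
    have hs' : |(γ - (b s : ℝ)) / (γ - (a s : ℝ))| < σ := by exact_mod_cast hs
    rw [abs_div, div_lt_iff₀ (abs_pos.2 (sub_ne_zero.2 (hirr _)))] at hs'
    exact hs'
  -- the two auxiliary sequences
  let u : ℕ → ℚ := fun s => (-σ / (1 - σ)) * a s + (1 / (1 - σ)) * b s
  let v : ℕ → ℚ := fun s => (σ / (1 + σ)) * a s + (1 / (1 + σ)) * b s
  have cu : Computable u := rcadd (rcmul (Computable.const _) ca) (rcmul (Computable.const _) cb)
  have cv : Computable v := rcadd (rcmul (Computable.const _) ca) (rcmul (Computable.const _) cb)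
  have eu : ∀ s, σ * (γ - a s) - (γ - b s) = -(1 - σ) * (γ - u s) := by
    intro s
    simp only [u]; push_cast
    have : (1 - σ : ℝ) ≠ 0 := by linarith
    field_simp; ring
  have ev : ∀ s, σ * (γ - a s) + (γ - b s) = (1 + σ) * (γ - v s) := by
    intro s
    simp only [v]; push_cast
    have : (1 + σ : ℝ) ≠ 0 := by linarith
    field_simp; ring
  have key : ∀ s, (σ * |γ - a s|)^2 - |γ - b s|^2 = -(1-σ)*(1+σ) * ((γ - u s) * (γ - v s)) := by
    intro s
    rw [mul_pow, sq_abs, sq_abs]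
    linear_combination (σ * (γ - a s) + (γ - b s)) * eu s + (-(1 - σ) * (γ - u s)) * ev s
  have hpos : 0 < (1 - (σ:ℝ)) * (1 + σ) := mul_pos (by linarith) (by linarith)
  have hnot : ¬ ∀ᶠ s in atTop, 0 < (γ - u s) * (γ - v s) := by
    intro hev
    obtain ⟨s, h1, h2⟩ := (hfreq.and_eventually hev).exists
    have h3 : |γ - b s|^2 < (σ * |γ - a s|)^2 := by
      apply pow_lt_pow_left₀ h1 (abs_nonneg _) two_ne_zero
    have := key s
    nlinarith [mul_pos hpos h2]
  have hev : ∀ᶠ s in atTop, (γ - u s) * (γ - v s) ≤ 0 := by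
    rcases sign_lemma hγ cu (summable_lin va vb _ _) hno with h1 | h1 <;>
    rcases sign_lemma hγ cv (summable_lin va vb _ _) hno with h2 | h2
    · exact absurd (by filter_upwards [h1, h2] with s h1 h2; exact mul_pos (sub_pos.2 h1) (sub_pos.2 h2)) hnot
    · filter_upwards [h1, h2] with s h1 h2
      exact mul_nonpos_of_nonneg_of_nonpos (sub_nonneg.2 h1.le) (sub_nonpos.2 h2.le)
    · filter_upwards [h1, h2] with s h1 h2
      exact mul_nonpos_of_nonpos_of_nonneg (sub_nonpos.2 h1.le) (sub_nonneg.2 h2.le)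
    · exact absurd (by filter_upwards [h1, h2] with s h1 h2; exact mul_pos_of_neg_of_neg (sub_neg.2 h1) (sub_neg.2 h2)) hnot
  have hev2 : ∀ᶠ s in atTop, (1 - σ) * |γ - a s| ≤ |(a s : ℝ) - b s| := by
    filter_upwards [hev] with s hs
    have h1 : |γ - b s| ≤ σ * |γ - a s| := by
      refine le_of_sq_le_sq ?_ (by positivity)
      have := key s
      nlinarith [mul_nonneg hpos.le (neg_nonneg.2 hs)]
    have h2 : |γ - a s| ≤ |γ - b s| + |(a s : ℝ) - b s| := by
      have := abs_sub_le γ (b s) (a s)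
      rwa [abs_sub_comm (b s : ℝ) (a s)] at this
    linarith
  -- fast subsequence
  let P : ℕ → ℕ → Prop := fun n s => n ≤ s ∧ max (a s - b s) (b s - a s) ≤ 1 / ((2^n : ℕ) : ℚ)
  have hPd : DecidableRel P := fun n s => by unfold P; infer_instance
  have hPex : ∀ n, ∃ s, P n s := by
    intro n
    have ht : Tendsto (fun s => |(a s : ℝ) - b s|) atTop (nhds 0) := by
      have := (ta.sub tb).abs
      simpa using this
    have hp : (0:ℝ) < 1 / ((2^n : ℕ) : ℝ) := by positivity
    obtain ⟨s, h1, h2⟩ := ((ht.eventually (gt_mem_nhds hp)).and (eventually_ge_atTop n)).exists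
    refine ⟨s, h2, ?_⟩
    have : ((max (a s - b s) (b s - a s) : ℚ) : ℝ) ≤ ((1 / ((2^n : ℕ) : ℚ) : ℚ) : ℝ) := by
      push_cast
      rw [abs_eq_max_neg, neg_sub] at h1
      push_cast at h1
      exact h1.le
    exact_mod_cast this
  have hPc : ComputablePred fun p : ℕ × ℕ => P p.1 p.2 := by
    refine ⟨fun p => inferInstance, ?_⟩
    have h1 : Computable fun p : ℕ × ℕ => decide (p.1 ≤ p.2) := Primrec.nat_le.decide.to_comp
    have ca' := ca.comp (Computable.snd (α := ℕ) (β := ℕ))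
    have cb' := cb.comp (Computable.snd (α := ℕ) (β := ℕ))
    have h2 := rcle (rcmax (rcsub ca' cb') (rcsub cb' ca')) (rcinvnat (cpow2 (Computable.fst (α := ℕ) (β := ℕ))))
    refine (Primrec.and.to_comp.comp h1 h2).of_eq fun p => ?_
    simp [P]
  have hS := Computable.find hPc hPex
  set S : ℕ → ℕ := fun n => Nat.find (hPex n) with hSdef
  have hSp : ∀ n, P n (S n) := fun n => Nat.find_spec (hPex n)
  have cK : Computable fun n : ℕ => (1 / (1 - σ)) * (1 / ((2^n : ℕ) : ℚ)) :=
    rcmul (Computable.const _) (rcinvnat (cpow2 Computable.id))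
  have haS : Computable fun n => a (S n) := ca.comp hS
  have hKpos : ∀ n : ℕ, 0 ≤ (1 / (1 - σ)) * (1 / ((2^n : ℕ) : ℚ)) := fun n =>
    mul_nonneg (one_div_nonneg.2 (by linarith)) (by positivity)
  apply hno
  refine exists_test hγ (rcsub haS cK) (rcadd haS cK) (fun n => by linarith [hKpos n]) ?_ ?_
  · have := (summable_geometric_two).mul_left (2 * (1 / (1 - (σ:ℝ))))
    refine this.congr fun n => ?_
    push_cast
    rw [div_pow, one_pow]
    ring
  · apply Filter.Eventually.frequently
    obtain ⟨N, hN⟩ := eventually_atTop.1 hev2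
    filter_upwards [eventually_ge_atTop N] with n hn
    have h1 := hN (S n) (hn.trans (hSp n).1)
    have h2 : |(a (S n) : ℝ) - b (S n)| ≤ 1 / ((2^n : ℕ) : ℝ) := by
      have := (hSp n).2
      have h3 : ((max (a (S n) - b (S n)) (b (S n) - a (S n)) : ℚ) : ℝ) ≤ ((1 / ((2^n : ℕ) : ℚ) : ℚ) : ℝ) := by exact_mod_cast this
      push_cast at h3
      rw [abs_eq_max_neg, neg_sub]
      push_cast
      exact h3
    have h3 : |γ - a (S n)| ≤ 1 / (1 - σ) * (1 / ((2^n : ℕ) : ℝ)) := by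
      rw [one_div_mul_eq_div, le_div_iff₀ (by linarith)]
      linarith
    rw [abs_le] at h3
    push_cast at h3 ⊢
    constructor <;> linarith [h3.1, h3.2]

theorem one_two {γ : ℝ} (h : StronglyDCEZeroSpeedable γ) : DCESpeedable γ := by
  obtain ⟨c, hc, h⟩ := h
  refine ⟨c, hc, 0, le_rfl, one_pos, ?_⟩
  rcases h with h | h
  · exact Or.inl h
  · refine Or.inr ⟨fun s => s + 1, ⟨Computable.succ, fun _ _ h => Nat.succ_le_succ h, tendsto_add_atTop_nat 1⟩, ?_⟩
    simpa using h

theorem two_three {γ : ℝ} (h : DCESpeedable γ) : WeaklyDCESpeedable γ := by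
  obtain ⟨a, ⟨⟨ca, ma, ta⟩, va⟩, ρ, h0, h1, h⟩ := h
  obtain ⟨σ, hσ1, hσ2⟩ := exists_between h1
  have hσ0 : 0 < σ := lt_of_le_of_lt h0 hσ1
  refine ⟨σ, hσ0, hσ2, ?_⟩
  rcases h with ⟨q, rfl⟩ | ⟨f, ⟨cf, mf, tf⟩, hf⟩
  · have hq : q ∈ Set.Icc (0:ℚ) 1 := by
      have h1 : (q:ℝ) ∈ Set.Icc (0:ℝ) 1 := by
        refine isClosed_Icc.mem_of_tendsto ta (Eventually.of_forall fun s => ?_)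
        have := ma s
        exact ⟨by exact_mod_cast this.1, by exact_mod_cast this.2⟩
      exact ⟨by exact_mod_cast h1.1, by exact_mod_cast h1.2⟩
    refine ⟨a, fun _ => q, ⟨⟨ca, ma, ta⟩, va⟩, ⟨⟨Computable.const q, fun _ => hq, tendsto_const_nhds⟩, by simpa using summable_zero⟩, ?_⟩
    simp
    exact_mod_cast hσ0.le
  · refine ⟨a, fun s => a (f s), ⟨⟨ca, ma, ta⟩, va⟩, ⟨⟨ca.comp cf, fun s => ma _, ta.comp tf⟩, ?_⟩, ?_⟩
    · exact summable_var_comp (a := fun s => (a s : ℝ)) va mf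
    · refine le_trans hf ?_
      exact_mod_cast hσ1.le
/-! Part 3: from Solovay tests to strong 0-speedability -/

section
variable {α : Type*} [Primcodable α]

theorem csum {f : α → ℕ → ℕ} {n : α → ℕ} (hf : Computable₂ f) (hn : Computable n) :
    Computable fun a => ∑ j ∈ Finset.range (n a), f a j := by
  refine (Computable.nat_rec (f := n) (g := fun _ => 0) (h := fun a p => p.2 + f a p.1) hn (Computable.const 0) ?_).of_eq fun a => ?_
  · exact cadd (Computable.snd.comp Computable.snd) (hf.comp Computable.fst (Computable.fst.comp Computable.snd))
  · induction n a with
    | zero => rfl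
    | succ n ih => rw [Finset.sum_range_succ, ← ih]

theorem cdand {p q : α → Prop} [DecidablePred p] [DecidablePred q] (hp : Computable fun a => decide (p a))
    (hq : Computable fun a => decide (q a)) : Computable fun a => decide (p a ∧ q a) :=
  (Primrec.and.to_comp.comp hp hq).of_eq fun a => by simp

theorem cdeq {f g : α → ℕ} (hf : Computable f) (hg : Computable g) : Computable fun a => decide (f a = g a) := by
  have heq : Computable₂ fun a b : ℕ => decide (a = b) := Primrec.eq.decide.to_comp
  exact heq.comp hf hg

theorem cdlt {f g : α → ℕ} (hf : Computable f) (hg : Computable g) : Computable fun a => decide (f a < g a) := by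
  have heq : Computable₂ fun a b : ℕ => decide (a < b) := Primrec.nat_lt.decide.to_comp
  exact heq.comp hf hg

theorem cdiv {f g : α → ℕ} (hf : Computable f) (hg : Computable g) : Computable fun a => f a / g a :=
  Primrec.nat_div.to_comp.comp hf hg
theorem cmod {f g : α → ℕ} (hf : Computable f) (hg : Computable g) : Computable fun a => f a % g a :=
  Primrec.nat_mod.to_comp.comp hf hg
end

/-- cell `k` of level `i` meets the `i`-th interval -/
def Hit (l r : ℕ → ℚ) (i k : ℕ) : Prop :=
  l i * ((2^i : ℕ) : ℚ) ≤ ((k + 1 : ℕ) : ℚ) ∧ (k : ℚ) ≤ r i * ((2^i : ℕ) : ℚ) ∧ k < 2^i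

instance (l r : ℕ → ℚ) (i k : ℕ) : Decidable (Hit l r i k) := by unfold Hit; infer_instance

def cnt (l r : ℕ → ℚ) (i k : ℕ) : ℕ :=
  ∑ j ∈ Finset.range (i+1), if Hit l r j (k / 2^(i-j)) then 1 else 0

def wt (n : ℕ) : ℕ := Nat.sqrt n * Nat.sqrt n - Nat.sqrt (n-1) * Nat.sqrt (n-1)

def om (l r : ℕ → ℚ) (i k : ℕ) : ℕ := if Hit l r i k then wt (cnt l r i k) else 0

theorem comp_hit {l r : ℕ → ℚ} (hl : Computable l) (hr : Computable r) :
    Computable fun p : ℕ × ℕ => decide (Hit l r p.1 p.2) := by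
  have h1 : Computable fun p : ℕ × ℕ => p.1 := Computable.fst
  have h2 : Computable fun p : ℕ × ℕ => p.2 := Computable.snd
  exact cdand (rcle (rcmul (hl.comp h1) (rcnat (cpow2 h1))) (rcnat (Computable.succ.comp h2)))
    (cdand (rcle (rcnat h2) (rcmul (hr.comp h1) (rcnat (cpow2 h1)))) (cdlt h2 (cpow2 h1)))

theorem comp_cnt {l r : ℕ → ℚ} (hl : Computable l) (hr : Computable r) :
    Computable fun p : ℕ × ℕ => cnt l r p.1 p.2 := by
  have hj : Computable fun q : (ℕ × ℕ) × ℕ => q.2 := Computable.snd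
  have hi : Computable fun q : (ℕ × ℕ) × ℕ => q.1.1 := Computable.fst.comp Computable.fst
  have hk : Computable fun q : (ℕ × ℕ) × ℕ => q.1.2 := Computable.snd.comp Computable.fst
  have hg : Computable fun q : (ℕ × ℕ) × ℕ => (q.2, q.1.2 / 2^(q.1.1-q.2)) :=
    hj.pair (cdiv hk (cpow2 (csub hi hj)))
  have hd : Computable fun q : (ℕ × ℕ) × ℕ => decide (Hit l r q.2 (q.1.2 / 2^(q.1.1-q.2))) := by
    have := comp_hit hl hr
    exact Computable.comp (f := fun p : ℕ × ℕ => decide (Hit l r p.1 p.2))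
      (g := fun q : (ℕ × ℕ) × ℕ => (q.2, q.1.2 / 2^(q.1.1-q.2))) this hg
  have h : Computable fun q : (ℕ × ℕ) × ℕ => if Hit l r q.2 (q.1.2 / 2^(q.1.1-q.2)) then 1 else 0 :=
    cite (p := fun q : (ℕ × ℕ) × ℕ => Hit l r q.2 (q.1.2 / 2^(q.1.1-q.2))) hd (Computable.const 1) (Computable.const 0)
  have h2 : Computable₂ fun (p : ℕ × ℕ) j => if Hit l r j (p.2 / 2^(p.1-j)) then 1 else 0 := h
  exact csum h2 (Computable.succ.comp Computable.fst)

theorem comp_om {l r : ℕ → ℚ} (hl : Computable l) (hr : Computable r) :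
    Computable fun p : ℕ × ℕ => om l r p.1 p.2 := by
  have hs : Computable Nat.sqrt := Primrec.nat_sqrt.to_comp
  have hw : Computable wt := by
    have h1 := hs.comp Computable.pred
    exact csub (cmul hs hs) (cmul h1 h1)
  exact cite (comp_hit hl hr) (hw.comp (comp_cnt hl hr)) (Computable.const 0)

theorem cnt_zero (l r : ℕ → ℚ) (k : ℕ) : cnt l r 0 k = if Hit l r 0 k then 1 else 0 := by
  unfold cnt
  rw [zero_add, Finset.sum_range_one]
  simp only [Nat.sub_self, pow_zero, Nat.div_one]

theorem cnt_succ (l r : ℕ → ℚ) (i k : ℕ) :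
    cnt l r (i+1) k = cnt l r i (k/2) + if Hit l r (i+1) k then 1 else 0 := by
  unfold cnt
  rw [Finset.sum_range_succ]
  congr 1
  · refine Finset.sum_congr rfl fun j hj => ?_
    have : i + 1 - j = (i - j) + 1 := by have := Finset.mem_range.1 hj; omega
    rw [this, pow_succ', Nat.div_div_eq_div_mul]
  · simp

theorem sum_half (f : ℕ → ℝ) (n : ℕ) : ∑ k ∈ Finset.range (2 * n), f (k / 2) = 2 * ∑ k ∈ Finset.range n, f k := by
  induction n with
  | zero => simp
  | succ n ih =>
    rw [show 2 * (n+1) = 2 * n + 1 + 1 by ring, Finset.sum_range_succ, Finset.sum_range_succ, ih, Finset.sum_range_succ]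
    rw [show (2 * n + 1) / 2 = n by omega, show (2 * n) / 2 = n by omega]
    ring

theorem sum_third (f : ℕ → ℝ) (n : ℕ) : ∑ k ∈ Finset.range (3 * n), f (k / 3) = 3 * ∑ k ∈ Finset.range n, f k := by
  induction n with
  | zero => simp
  | succ n ih =>
    rw [show 3 * (n+1) = 3 * n + 1 + 1 + 1 by ring, Finset.sum_range_succ, Finset.sum_range_succ, Finset.sum_range_succ, ih, Finset.sum_range_succ]
    rw [show (3 * n + 1) / 3 = n by omega, show (3 * n) / 3 = n by omega, show (3 * n + 1 + 1) / 3 = n by omega]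
    ring

theorem summable_third {f : ℕ → ℝ} (h0 : ∀ n, 0 ≤ f n) (h : Summable f) : Summable fun n => f (n / 3) := by
  refine summable_of_sum_range_le (c := 3 * ∑' n, f n) (fun n => h0 _) fun n => ?_
  calc ∑ i ∈ Finset.range n, f (i/3) ≤ ∑ i ∈ Finset.range (3 * n), f (i/3) :=
        Finset.sum_le_sum_of_subset_of_nonneg (Finset.range_subset_range.2 (by omega)) fun _ _ _ => h0 _
    _ = 3 * ∑ i ∈ Finset.range n, f i := sum_third f n
    _ ≤ _ := by
      have := h.sum_le_tsum (Finset.range n) fun _ _ => h0 _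
      linarith

theorem tele (l r : ℕ → ℚ) (W : ℕ → ℝ) (hW : W 0 = 0) (i : ℕ) :
    ∑ k ∈ Finset.range (2^i), W (cnt l r i k) / 2^i =
    ∑ j ∈ Finset.range (i+1), ∑ k ∈ Finset.range (2^j),
      (if Hit l r j k then W (cnt l r j k) - W (cnt l r j k - 1) else 0) / 2^j := by
  induction i with
  | zero =>
    simp only [pow_zero, Finset.sum_range_one, zero_add]
    rw [cnt_zero]
    split_ifs <;> simp [hW]
  | succ i ih =>
    rw [Finset.sum_range_succ, ← ih]
    have h1 : ∀ k, W (cnt l r (i+1) k) / 2^(i+1) = W (cnt l r i (k/2)) / 2^(i+1) +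
        (if Hit l r (i+1) k then W (cnt l r (i+1) k) - W (cnt l r (i+1) k - 1) else 0) / 2^(i+1) := by
      intro k
      rw [← add_div]
      congr 1
      rw [cnt_succ]
      split_ifs <;> simp
    rw [Finset.sum_congr rfl fun k _ => h1 k, Finset.sum_add_distrib]
    congr 1
    have := sum_half (fun k => W (cnt l r i k) / 2^(i+1)) (2^i)
    rw [← pow_succ'] at this
    rw [this, Finset.mul_sum]
    refine Finset.sum_congr rfl fun k _ => ?_
    rw [pow_succ]; field_simp

theorem wt_eq (n : ℕ) : (wt n : ℝ) = ((Nat.sqrt n * Nat.sqrt n : ℕ) : ℝ) - ((Nat.sqrt (n-1) * Nat.sqrt (n-1) : ℕ) : ℝ) := by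
  unfold wt
  rw [Nat.cast_sub]
  exact Nat.mul_self_le_mul_self (Nat.sqrt_le_sqrt (Nat.sub_le _ _))

theorem om_sum_le (l r : ℕ → ℚ) (i : ℕ) :
    ∑ j ∈ Finset.range i, ∑ k ∈ Finset.range (2^j), (om l r j k : ℝ) / 2^j ≤
    ∑ j ∈ Finset.range i, ∑ k ∈ Finset.range (2^j), (if Hit l r j k then (1:ℝ) else 0) / 2^j := by
  cases i with
  | zero => simp
  | succ i =>
    have h1 := tele l r (fun n => ((Nat.sqrt n * Nat.sqrt n : ℕ) : ℝ)) (by simp) i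
    have h2 := tele l r (fun n => (n : ℝ)) (by simp) i
    have e1 : ∀ j k, (om l r j k : ℝ) = (if Hit l r j k then (fun n => ((Nat.sqrt n * Nat.sqrt n : ℕ) : ℝ)) (cnt l r j k) -
        (fun n => ((Nat.sqrt n * Nat.sqrt n : ℕ) : ℝ)) (cnt l r j k - 1) else 0) := by
      intro j k
      unfold om
      split_ifs
      · rw [wt_eq]
      · simp
    have e2 : ∀ j k, (if Hit l r j k then (1:ℝ) else 0) = (if Hit l r j k then (fun n : ℕ => (n : ℝ)) (cnt l r j k) -
        (fun n : ℕ => (n : ℝ)) (cnt l r j k - 1) else 0) := by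
      intro j k
      split_ifs with h
      · have : 1 ≤ cnt l r j k := by
          cases j with
          | zero => rw [cnt_zero, if_pos h]
          | succ j => rw [cnt_succ, if_pos h]; omega
        simp only
        rw [Nat.cast_sub this]; simp
      · rfl
    simp_rw [e1, e2]
    rw [← h1, ← h2]
    refine Finset.sum_le_sum fun k _ => ?_
    refine div_le_div_of_nonneg_right ?_ (by positivity)
    exact_mod_cast Nat.sqrt_le _

theorem hit_count {l r : ℕ → ℚ} (hr0 : ∀ i, 0 ≤ r i) (hle : ∀ i, l i ≤ r i) (j : ℕ) :
    ∑ k ∈ Finset.range (2^j), (if Hit l r j k then (1:ℝ) else 0) / 2^j ≤ ((r j : ℝ) - l j) + 2 * (1/2)^j := by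
  rw [← Finset.sum_div, Finset.sum_boole]
  have hsub : (Finset.range (2^j)).filter (fun k => Hit l r j k) ⊆
      Finset.Icc ⌈l j * ((2^j : ℕ) : ℚ) - 1⌉₊ ⌊r j * ((2^j : ℕ) : ℚ)⌋₊ := by
    intro k hk
    obtain ⟨h1, h2, h3⟩ := (Finset.mem_filter.1 hk).2
    rw [Finset.mem_Icc]
    refine ⟨Nat.ceil_le.2 ?_, Nat.le_floor h2⟩
    push_cast at h1 ⊢; linarith
  have hp : (0:ℚ) < ((2^j : ℕ) : ℚ) := by positivity
  have hcard : ((((Finset.range (2^j)).filter (fun k => Hit l r j k)).card : ℕ) : ℚ) ≤ (r j - l j) * ((2^j : ℕ) : ℚ) + 2 := by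
    have h1 := Finset.card_le_card hsub
    rw [Nat.card_Icc] at h1
    have h2 := Nat.floor_le (mul_nonneg (hr0 j) hp.le)
    have h3 := Nat.le_ceil (l j * ((2^j : ℕ) : ℚ) - 1)
    rcases le_total ⌈l j * ((2^j : ℕ) : ℚ) - 1⌉₊ (⌊r j * ((2^j : ℕ) : ℚ)⌋₊ + 1) with h | h
    · have h4 : ((((Finset.range (2^j)).filter (fun k => Hit l r j k)).card : ℕ) : ℚ) ≤ 
        ((⌊r j * ((2^j : ℕ) : ℚ)⌋₊ + 1 - ⌈l j * ((2^j : ℕ) : ℚ) - 1⌉₊ : ℕ) : ℚ) := by exact_mod_cast h1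
      rw [Nat.cast_sub h, Nat.cast_add, Nat.cast_one] at h4
      linarith
    · rw [Nat.sub_eq_zero_of_le h] at h1
      have : ((Finset.range (2^j)).filter (fun k => Hit l r j k)).card = 0 := by omega
      rw [this]
      have := mul_nonneg (sub_nonneg.2 (hle j)) hp.le
      push_cast at this ⊢; linarith
  have hcard' : ((((Finset.range (2^j)).filter (fun k => Hit l r j k)).card : ℕ) : ℝ) ≤ ((r j : ℝ) - l j) * 2^j + 2 := by
    exact_mod_cast hcard
  rw [div_le_iff₀ (by positivity)]
  refine hcard'.trans (le_of_eq ?_)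
  rw [add_mul, mul_assoc 2, ← mul_pow]; norm_num

theorem summable_om {l r : ℕ → ℚ} (hr0 : ∀ i, 0 ≤ r i) (hle : ∀ i, l i ≤ r i)
    (hs : Summable fun i => (r i : ℝ) - l i) :
    Summable fun p : ℕ × ℕ => (om l r p.1 p.2 : ℝ) / 2^p.1 := by
  have hz : ∀ j k, k ∉ Finset.range (2^j) → (om l r j k : ℝ) / 2^j = 0 := by
    intro j k hk
    have : ¬ Hit l r j k := fun h => hk (Finset.mem_range.2 h.2.2)
    simp [om, this]
  rw [summable_prod_of_nonneg (fun p => by positivity)]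
  refine ⟨fun j => summable_of_ne_finset_zero (s := Finset.range (2^j)) fun k hk => hz j k hk, ?_⟩
  have e : ∀ j, ∑' k, (om l r j k : ℝ) / 2^j = ∑ k ∈ Finset.range (2^j), (om l r j k : ℝ) / 2^j := fun j =>
    tsum_eq_sum fun k hk => hz j k hk
  have hs2 : Summable fun j => ((r j : ℝ) - l j) + 2 * (1/2)^j := hs.add (summable_geometric_two.mul_left 2)
  refine summable_of_sum_range_le (c := ∑' j, (((r j : ℝ) - l j) + 2 * (1/2)^j)) (fun j => tsum_nonneg fun k => by positivity) fun n => ?_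
  simp only [e]
  refine (om_sum_le l r n).trans ?_
  refine (Finset.sum_le_sum fun j _ => hit_count hr0 hle j).trans ?_
  refine hs2.sum_le_tsum _ fun j _ => ?_
  have : (l j : ℝ) ≤ r j := by exact_mod_cast hle j
  have : (0:ℝ) ≤ (1/2)^j := by positivity
  linarith

theorem om_large {γ : ℝ} (hγ : γ ∈ Set.Ioo (0:ℝ) 1) {l r : ℕ → ℚ}
    (hc : ∃ᶠ i in atTop, γ ∈ Set.Icc (l i : ℝ) (r i : ℝ)) (n : ℕ) :
    ∃ i k : ℕ, n ≤ om l r i k ∧ (k : ℝ) ≤ γ * 2^i ∧ γ * 2^i < k + 1 := by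
  let K : ℕ → ℕ := fun i => ⌊γ * 2^i⌋₊
  have hK0 : ∀ i, 0 ≤ γ * 2^i := fun i => mul_nonneg hγ.1.le (by positivity)
  have hK1 : ∀ i, (K i : ℝ) ≤ γ * 2^i := fun i => Nat.floor_le (hK0 i)
  have hK2 : ∀ i, γ * 2^i < K i + 1 := fun i => Nat.lt_floor_add_one _
  have hKs : ∀ i, K (i+1) / 2 = K i := by
    intro i
    simp only [K]
    rw [← Nat.floor_div_natCast]
    congr 1
    rw [pow_succ]; push_cast; ring
  have hhit : ∀ i, γ ∈ Set.Icc (l i : ℝ) (r i : ℝ) → Hit l r i (K i) := by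
    rintro i ⟨h1, h2⟩
    have hp : (0:ℝ) < 2^i := by positivity
    refine ⟨?_, ?_, ?_⟩
    · have : (l i : ℝ) * 2^i ≤ (K i : ℝ) + 1 := (mul_le_mul_of_nonneg_right h1 hp.le).trans (hK2 i).le
      exact_mod_cast this
    · have : (K i : ℝ) ≤ r i * 2^i := (hK1 i).trans (mul_le_mul_of_nonneg_right h2 hp.le)
      exact_mod_cast this
    · have : (K i : ℝ) < 2^i := lt_of_le_of_lt (hK1 i) (by nlinarith [hγ.2])
      exact_mod_cast this
  let C : ℕ → ℕ := fun i => cnt l r i (K i)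
  have hCs : ∀ i, C (i+1) = C i + if Hit l r (i+1) (K (i+1)) then 1 else 0 := by
    intro i
    simp only [C]
    rw [cnt_succ, hKs]
  have hCm : Monotone C := monotone_nat_of_le_succ fun i => by rw [hCs]; omega
  have hCu : ∀ v, ∃ i, v ≤ C i := by
    intro v
    induction v with
    | zero => exact ⟨0, Nat.zero_le _⟩
    | succ v ih =>
      obtain ⟨i, hi⟩ := ih
      obtain ⟨j, hj1, hj2⟩ := Filter.frequently_atTop.1 hc (i+1)
      obtain ⟨j, rfl⟩ : ∃ j', j = j' + 1 := ⟨j - 1, by omega⟩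
      refine ⟨j+1, ?_⟩
      rw [hCs, if_pos (hhit _ hj2)]
      have := hCm (show i ≤ j by omega)
      omega
  -- target value
  let v := (n+2) * (n+2)
  have hex := hCu v
  obtain ⟨i, hi, hmin⟩ : ∃ i, v ≤ C i ∧ ∀ j < i, C j < v :=
    ⟨Nat.find hex, Nat.find_spec hex, fun j hj => not_le.1 (Nat.find_min hex hj)⟩
  have hv : 4 ≤ v := by simp only [v]; nlinarith
  cases i with
  | zero =>
    exfalso
    simp only [C, cnt_zero] at hi
    split_ifs at hi <;> omega
  | succ i =>
    have h1 := hmin i (Nat.lt_succ_self i)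
    have h2 := hCs i
    by_cases hH : Hit l r (i+1) (K (i+1))
    · rw [if_pos hH] at h2
      have hCv : C (i+1) = v := by omega
      refine ⟨i+1, K (i+1), ?_, hK1 _, hK2 _⟩
      unfold om
      rw [if_pos hH]
      change n ≤ wt (C (i+1))
      rw [hCv]
      unfold wt
      have e1 : Nat.sqrt v = n + 2 := Nat.sqrt_eq (n+2)
      have e2 : Nat.sqrt (v-1) < n + 2 := by
        rw [Nat.sqrt_lt]
        simp only [v] at hv ⊢; omega
      rw [e1]
      have e3 : Nat.sqrt (v-1) * Nat.sqrt (v-1) ≤ (n+1) * (n+1) := Nat.mul_self_le_mul_self (by omega)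
      apply Nat.le_sub_of_add_le
      nlinarith
    · rw [if_neg hH] at h2
      omega

/-! Part 4: the sequence -/

def ci (s : ℕ) : ℕ := s.unpair.1
def ck (s : ℕ) : ℕ := s.unpair.2.unpair.1

def InC (a : ℕ → ℚ) (s : ℕ) : Prop :=
  (ck s : ℚ) ≤ a s * ((2^ci s : ℕ) : ℚ) ∧ a s * ((2^ci s : ℕ) : ℚ) ≤ ((ck s + 1 : ℕ) : ℚ)

instance (a : ℕ → ℚ) : DecidablePred (InC a) := fun s => by unfold InC; infer_instance

def prior (a : ℕ → ℚ) (s : ℕ) : ℕ :=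
  ∑ t ∈ Finset.range s, if (ci t = ci s ∧ ck t = ck s) ∧ InC a t then 1 else 0

def Fst (l r a : ℕ → ℚ) (s : ℕ) : Prop :=
  InC a s ∧ prior a s = 0 ∧ 0 < om l r (ci s) (ck s)

instance (l r a : ℕ → ℚ) : DecidablePred (Fst l r a) := fun s => by unfold Fst; infer_instance

def far (l r : ℕ → ℚ) (s : ℕ) : ℚ :=
  max 0 (((ck s : ℚ) - (om l r (ci s) (ck s) : ℚ)) * (1 / ((2^ci s : ℕ) : ℚ)))

def near (s : ℕ) : ℚ := (ck s : ℚ) * (1 / ((2^ci s : ℕ) : ℚ))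

def dd (l r a : ℕ → ℚ) (n : ℕ) : ℚ :=
  if Fst l r a (n/3) then
    (if n % 3 = 1 then far l r (n/3) else if n % 3 = 2 then near (n/3) else a (n/3))
  else a (n/3)

theorem comp_ci : Computable ci := Computable.fst.comp Computable.unpair
theorem comp_ck : Computable ck := Computable.fst.comp (Computable.unpair.comp (Computable.snd.comp Computable.unpair))

theorem comp_omc {l r : ℕ → ℚ} (hl : Computable l) (hr : Computable r) :
    Computable fun s => om l r (ci s) (ck s) :=
  Computable.comp (f := fun p : ℕ × ℕ => om l r p.1 p.2) (g := fun s => (ci s, ck s)) (comp_om hl hr)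
    (comp_ci.pair comp_ck)

theorem comp_InC {a : ℕ → ℚ} (ha : Computable a) : Computable fun s => decide (InC a s) := by
  have h : Computable fun s => a s * ((2^ci s : ℕ) : ℚ) := rcmul ha (rcnat (cpow2 comp_ci))
  exact cdand (rcle (rcnat comp_ck) h) (rcle h (rcnat (Computable.succ.comp comp_ck)))

theorem comp_prior {a : ℕ → ℚ} (ha : Computable a) : Computable (prior a) := by
  have h2 : Computable fun q : ℕ × ℕ => decide (InC a q.2) :=
    Computable.comp (f := fun s => decide (InC a s)) (g := fun q : ℕ × ℕ => q.2) (comp_InC ha) Computable.snd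
  have h1 : Computable fun q : ℕ × ℕ => decide ((ci q.2 = ci q.1 ∧ ck q.2 = ck q.1) ∧ InC a q.2) :=
    cdand (p := fun q : ℕ × ℕ => ci q.2 = ci q.1 ∧ ck q.2 = ck q.1) (q := fun q : ℕ × ℕ => InC a q.2)
      (cdand (cdeq (comp_ci.comp Computable.snd) (comp_ci.comp Computable.fst))
        (cdeq (comp_ck.comp Computable.snd) (comp_ck.comp Computable.fst))) h2
  have h3 : Computable fun q : ℕ × ℕ => if (ci q.2 = ci q.1 ∧ ck q.2 = ck q.1) ∧ InC a q.2 then 1 else 0 :=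
    cite (p := fun q : ℕ × ℕ => (ci q.2 = ci q.1 ∧ ck q.2 = ck q.1) ∧ InC a q.2) h1 (Computable.const 1) (Computable.const 0)
  have h4 : Computable₂ fun s t : ℕ => if (ci t = ci s ∧ ck t = ck s) ∧ InC a t then 1 else 0 := h3
  exact csum h4 Computable.id

theorem comp_Fst {l r a : ℕ → ℚ} (hl : Computable l) (hr : Computable r) (ha : Computable a) :
    Computable fun s => decide (Fst l r a s) := by
  have h : Computable fun s => decide (prior a s = 0 ∧ 0 < om l r (ci s) (ck s)) :=
    cdand (p := fun s => prior a s = 0) (q := fun s => 0 < om l r (ci s) (ck s))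
      (cdeq (comp_prior ha) (Computable.const 0)) (cdlt (Computable.const 0) (comp_omc hl hr))
  exact cdand (p := InC a) (q := fun s => prior a s = 0 ∧ 0 < om l r (ci s) (ck s)) (comp_InC ha) h

theorem comp_dd {l r a : ℕ → ℚ} (hl : Computable l) (hr : Computable r) (ha : Computable a) :
    Computable (dd l r a) := by
  have h3 : Computable fun n : ℕ => n / 3 := cdiv Computable.id (Computable.const 3)
  have hm : Computable fun n : ℕ => n % 3 := cmod Computable.id (Computable.const 3)
  have hi : Computable fun s => 1 / ((2^ci s : ℕ) : ℚ) := rcinvnat (cpow2 comp_ci)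
  have hf : Computable (far l r) :=
    rcmax (Computable.const 0) (rcmul (rcsub (rcnat comp_ck) (rcnat (comp_omc hl hr))) hi)
  have hn : Computable near := rcmul (rcnat comp_ck) hi
  have hd : Computable fun n => decide (Fst l r a (n/3)) :=
    Computable.comp (f := fun s => decide (Fst l r a s)) (g := fun n => n / 3) (comp_Fst hl hr ha) h3
  exact cite (p := fun n => Fst l r a (n/3)) hd
    (cite (p := fun n => n % 3 = 1) (cdeq hm (Computable.const 1)) (hf.comp h3)
      (cite (p := fun n => n % 3 = 2) (cdeq hm (Computable.const 2)) (hn.comp h3) (ha.comp h3))) (ha.comp h3)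

theorem prior_zero {a : ℕ → ℚ} {s t : ℕ} (h : prior a s = 0) (hts : t < s) (h1 : ci t = ci s) (h2 : ck t = ck s) :
    ¬ InC a t := by
  intro h3
  unfold prior at h
  rw [Finset.sum_eq_zero_iff] at h
  have := h t (Finset.mem_range.2 hts)
  rw [if_pos ⟨⟨h1, h2⟩, h3⟩] at this
  omega

theorem om_hit {l r : ℕ → ℚ} {i k : ℕ} (h : 0 < om l r i k) : Hit l r i k := by
  by_contra hn
  rw [om, if_neg hn] at h
  omega

noncomputable def cost (l r a : ℕ → ℚ) (s : ℕ) : ℝ :=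
  if Fst l r a s then (om l r (ci s) (ck s) : ℝ) / 2^ci s else 0

theorem cost_nonneg (l r a : ℕ → ℚ) (s : ℕ) : 0 ≤ cost l r a s := by
  unfold cost
  split_ifs <;> positivity

theorem summable_cost {l r : ℕ → ℚ} (a : ℕ → ℚ) (hr0 : ∀ i, 0 ≤ r i) (hle : ∀ i, l i ≤ r i)
    (hs : Summable fun i => (r i : ℝ) - l i) : Summable (cost l r a) := by
  have h := summable_om hr0 hle hs
  have hinj : Function.Injective fun s : {s | Fst l r a s} => (ci s, ck s) := by
    rintro ⟨s, hs⟩ ⟨t, ht⟩ hst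
    simp only [Prod.mk.injEq] at hst
    rcases lt_trichotomy s t with h | h | h
    · exact absurd hs.1 (prior_zero ht.2.1 h hst.1 hst.2)
    · exact Subtype.ext h
    · exact absurd ht.1 (prior_zero hs.2.1 h hst.1.symm hst.2.symm)
  have h2 := h.comp_injective hinj
  have h3 := (summable_subtype_iff_indicator (f := fun s => (om l r (ci s) (ck s) : ℝ) / 2^ci s) (s := {s | Fst l r a s})).1 h2
  refine h3.congr fun s => ?_
  unfold cost
  by_cases hF : Fst l r a s
  · rw [if_pos hF, Set.indicator_of_mem (show s ∈ {s | Fst l r a s} from hF)]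
  · rw [if_neg hF, Set.indicator_of_notMem (show s ∉ {s | Fst l r a s} from hF)]

theorem near_close {a : ℕ → ℚ} {s : ℕ} (h : InC a s) :
    (near s : ℝ) ≤ a s ∧ (a s : ℝ) ≤ near s + 1 / 2^ci s := by
  have hp : (0:ℝ) < 2^ci s := by positivity
  obtain ⟨h1, h2⟩ := h
  have h1 : (ck s : ℝ) ≤ a s * 2^ci s := by exact_mod_cast h1
  have h2 : (a s : ℝ) * 2^ci s ≤ ck s + 1 := by exact_mod_cast h2
  unfold near
  push_cast
  rw [mul_one_div, ← add_div]
  exact ⟨(div_le_iff₀ hp).2 h1, (le_div_iff₀ hp).2 h2⟩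

theorem near_nonneg (s : ℕ) : 0 ≤ near s := by unfold near; positivity

theorem far_le (l r : ℕ → ℚ) (s : ℕ) : far l r s ≤ near s := by
  refine max_le (near_nonneg s) ?_
  unfold near
  refine mul_le_mul_of_nonneg_right ?_ (by positivity)
  have : (0:ℚ) ≤ (om l r (ci s) (ck s) : ℚ) := by positivity
  linarith

theorem far_ge (l r : ℕ → ℚ) (s : ℕ) : (near s : ℝ) - (om l r (ci s) (ck s) : ℝ) / 2^ci s ≤ far l r s := by
  have : near s - (om l r (ci s) (ck s) : ℚ) / ((2^ci s : ℕ) : ℚ) ≤ far l r s := by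
    refine le_trans (le_of_eq ?_) (le_max_right _ _)
    unfold near; ring
  have h2 := (Rat.cast_le (K := ℝ)).2 this
  push_cast at h2
  exact h2

theorem near_le_one {l r a : ℕ → ℚ} {s : ℕ} (h : Fst l r a s) : near s ≤ 1 := by
  have := (om_hit h.2.2).2.2
  unfold near
  rw [mul_one_div, div_le_one (by positivity)]
  exact_mod_cast this.le

theorem dd_close (l r a : ℕ → ℚ) (n : ℕ) : |(dd l r a n : ℝ) - a (n/3)| ≤ 2 * cost l r a (n/3) := by
  have h0 := cost_nonneg l r a (n/3)
  by_cases hF : Fst l r a (n/3)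
  · have hc : cost l r a (n/3) = (om l r (ci (n/3)) (ck (n/3)) : ℝ) / 2^ci (n/3) := if_pos hF
    have h1 := near_close hF.1
    have h2 : (1:ℝ) / 2^ci (n/3) ≤ cost l r a (n/3) := by
      rw [hc]
      refine div_le_div_of_nonneg_right ?_ (by positivity)
      exact_mod_cast hF.2.2
    have h3 : (far l r (n/3) : ℝ) ≤ near (n/3) := by exact_mod_cast far_le l r (n/3)
    have h4 := far_ge l r (n/3)
    rw [← hc] at h4
    unfold dd
    rw [if_pos hF, abs_le]
    split_ifs
    · constructor <;> linarith [h1.1, h1.2]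
    · constructor <;> linarith [h1.1, h1.2]
    · constructor <;> linarith
  · unfold dd
    rw [if_neg hF]
    simpa using h0

theorem dd_mem {l r a : ℕ → ℚ} (ha : ∀ s, a s ∈ Set.Icc (0:ℚ) 1) (n : ℕ) : dd l r a n ∈ Set.Icc (0:ℚ) 1 := by
  unfold dd
  split_ifs with hF
  · exact ⟨le_max_left _ _, (far_le _ _ _).trans (near_le_one hF)⟩
  · exact ⟨near_nonneg _, near_le_one hF⟩
  · exact ha _
  · exact ha _

theorem dd_dce {γ : ℝ} {l r a : ℕ → ℚ} (hl : Computable l) (hr : Computable r) (hr0 : ∀ i, 0 ≤ r i)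
    (hle : ∀ i, l i ≤ r i) (hs : Summable fun i => (r i : ℝ) - l i) (ha : IsDCEApprox a γ) :
    IsDCEApprox (dd l r a) γ := by
  obtain ⟨⟨ca, ma, ta⟩, va⟩ := ha
  have hc : Summable fun n => 2 * cost l r a (n/3) :=
    (summable_third (cost_nonneg l r a) (summable_cost a hr0 hle hs)).mul_left 2
  refine ⟨⟨comp_dd hl hr ca, dd_mem ma, ?_⟩, ?_⟩
  · have h1 : Tendsto (fun n => (dd l r a n : ℝ) - a (n/3)) atTop (nhds 0) :=
      squeeze_zero_norm (fun n => by rw [Real.norm_eq_abs]; exact dd_close l r a n) hc.tendsto_atTop_zero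
    have h2 : Tendsto (fun n : ℕ => (a (n/3) : ℝ)) atTop (nhds γ) :=
      ta.comp (Nat.tendsto_div_const_atTop (by norm_num))
    have := h1.add h2
    simpa using this
  · have h1 := summable_var_comp (a := fun s => (a s : ℝ)) va (f := fun n => n / 3)
      (fun x y h => Nat.div_le_div_right h)
    have h2 := (summable_nat_add_iff 1).2 hc
    refine Summable.of_nonneg_of_le (fun _ => abs_nonneg _) (fun n => ?_) ((h1.add hc).add h2)
    have e1 := abs_le.1 (dd_close l r a n)
    have e2 := abs_le.1 (dd_close l r a (n+1))
    have e3 := le_abs_self ((a ((n+1)/3) : ℝ) - a (n/3))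
    have e4 := neg_abs_le ((a ((n+1)/3) : ℝ) - a (n/3))
    rw [abs_le]
    constructor <;> linarith [e1.1, e1.2, e2.1, e2.2]

theorem exists_first {γ : ℝ} {l r a : ℕ → ℚ} (ta : Tendsto (fun s => (a s : ℝ)) atTop (nhds γ)) {i k : ℕ}
    (hom : 0 < om l r i k) (h1 : (k:ℝ) < γ * 2^i) (h2 : γ * 2^i < k + 1) :
    ∃ s, ci s = i ∧ ck s = k ∧ Fst l r a s := by
  have ht : Tendsto (fun s => (a s : ℝ) * 2^i) atTop (nhds (γ * 2^i)) := ta.mul_const _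
  obtain ⟨N, hN⟩ := eventually_atTop.1 ((ht.eventually (lt_mem_nhds h1)).and (ht.eventually (gt_mem_nhds h2)))
  have hex : ∃ s, ci s = i ∧ ck s = k ∧ InC a s := by
    let s := Nat.pair i (Nat.pair k N)
    have e1 : ci s = i := by simp [ci, s]
    have e2 : ck s = k := by simp [ck, s]
    have e3 : N ≤ s := (Nat.right_le_pair k N).trans (Nat.right_le_pair i _)
    refine ⟨s, e1, e2, ?_⟩
    obtain ⟨h3, h4⟩ := hN s e3
    unfold InC
    rw [e1, e2]
    constructor
    · have := h3.le
      exact_mod_cast this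
    · have := h4.le
      exact_mod_cast this
  classical
  obtain ⟨e1, e2, e3⟩ := Nat.find_spec hex
  refine ⟨Nat.find hex, e1, e2, e3, ?_, by rwa [e1, e2]⟩
  unfold prior
  refine Finset.sum_eq_zero fun t ht => ?_
  rw [if_neg]
  rintro ⟨⟨h3, h4⟩, h5⟩
  exact Nat.find_min hex (Finset.mem_range.1 ht) ⟨h3.trans e1, h4.trans e2, h5⟩

theorem ratio_freq {γ : ℝ} (hγ : γ ∈ Set.Ioo (0:ℝ) 1) (hirr : ∀ q : ℚ, γ ≠ q) {l r a : ℕ → ℚ}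
    (hr0 : ∀ i, 0 ≤ r i) (hle : ∀ i, l i ≤ r i) (hs : Summable fun i => (r i : ℝ) - l i)
    (hc : ∃ᶠ i in atTop, γ ∈ Set.Icc (l i : ℝ) (r i : ℝ))
    (ta : Tendsto (fun s => (a s : ℝ)) atTop (nhds γ)) {ε : ℝ} (hε : 0 < ε) :
    ∃ᶠ n in atTop, |(γ - (dd l r a (n+1) : ℝ)) / (γ - (dd l r a n : ℝ))| ≤ ε := by
  have hsum := summable_om hr0 hle hs
  set M := ∑' p : ℕ × ℕ, (om l r p.1 p.2 : ℝ) / 2^p.1 with hM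
  rw [Filter.frequently_atTop]
  intro N
  obtain ⟨n1, hn1⟩ := exists_nat_ge (1 / ε)
  obtain ⟨n2, hn2⟩ := exists_nat_ge (M / (ε * γ))
  let n3 := ∑ s ∈ Finset.range N, om l r (ci s) (ck s)
  obtain ⟨i, k, hn, hk1, hk2⟩ := om_large hγ hc (n1 + n2 + n3 + 1)
  have hp : (0:ℝ) < 2^i := by positivity
  have hk1' : (k:ℝ) < γ * 2^i := by
    refine lt_of_le_of_ne hk1 fun h => hirr ((k:ℚ) / 2^i) ?_
    push_cast
    rw [eq_div_iff hp.ne', h]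
  obtain ⟨s, e1, e2, hF⟩ := exists_first (l := l) (r := r) ta (by omega) hk1' hk2
  have hsN : N ≤ s := by
    by_contra hlt
    have := Finset.single_le_sum (f := fun s => om l r (ci s) (ck s)) (fun _ _ => Nat.zero_le _)
      (Finset.mem_range.2 (not_le.1 hlt))
    simp only [e1, e2] at this
    change _ ≤ n3 at this
    omega
  refine ⟨3 * s + 1, by omega, ?_⟩
  have d1 : dd l r a (3*s+1) = far l r s := by
    unfold dd
    rw [show (3*s+1)/3 = s by omega, show (3*s+1)%3 = 1 by omega, if_pos hF, if_pos rfl]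
  have d2 : dd l r a (3*s+1+1) = near s := by
    unfold dd
    rw [show (3*s+1+1)/3 = s by omega, show (3*s+1+1)%3 = 2 by omega, if_pos hF, if_neg (by norm_num), if_pos rfl]
  rw [d1, d2]
  have hnear : (near s : ℝ) = k / 2^i := by
    unfold near; rw [e1, e2]; push_cast; ring
  set m := om l r i k with hm
  have hmM : (m:ℝ) / 2^i ≤ M := hsum.le_tsum (i, k) fun _ _ => by positivity
  have hm1 : 1 ≤ ε * m := by
    have : (n1:ℝ) ≤ m := by exact_mod_cast (show n1 ≤ m by omega)
    rw [div_le_iff₀ hε] at hn1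
    nlinarith
  have hm2 : M ≤ ε * γ * m := by
    have : (n2:ℝ) ≤ m := by exact_mod_cast (show n2 ≤ m by omega)
    have hpos := mul_pos hε hγ.1
    rw [div_le_iff₀ hpos] at hn2
    nlinarith
  have hm0 : (0:ℝ) < m := by exact_mod_cast (show 0 < m by omega)
  have hlow : (near s : ℝ) < γ := by rw [hnear, div_lt_iff₀ hp]; exact hk1'
  have hup : γ - near s ≤ 1 / 2^i := by
    rw [hnear, sub_le_iff_le_add, ← add_div, le_div_iff₀ hp]; linarith
  have hfn : (far l r s : ℝ) ≤ near s := by exact_mod_cast far_le l r s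
  have hfar : 0 < γ - far l r s := by linarith
  rw [abs_div, abs_of_pos hfar, abs_of_pos (sub_pos.2 hlow), div_le_iff₀ hfar]
  refine hup.trans ?_
  have hfe : (far l r s : ℝ) = max (0:ℝ) (((k:ℝ) - (m:ℝ)) * (1 / 2^i)) := by
    unfold far; rw [e1, e2]; push_cast; rfl
  rcases max_cases (0:ℝ) ((k - m) * (1 / 2^i)) with h | h
  · rw [hfe, h.1, sub_zero]
    rw [div_le_iff₀ hp] at hmM ⊢
    by_contra hcon
    push Not at hcon
    have h5 : ε * γ * 2^i * m < 1 * m := mul_lt_mul_of_pos_right hcon hm0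
    nlinarith
  · rw [hfe, h.1]
    have h6 : (m:ℝ) * (1 / 2^i) ≤ γ - (k - m) * (1 / 2^i) := by
      have : (k:ℝ) * (1/2^i) ≤ γ := by rw [mul_one_div, ← hnear]; exact hlow.le
      linarith
    have h7 : (0:ℝ) < 1 / 2^i := by positivity
    nlinarith [mul_le_mul_of_nonneg_left h6 hε.le, mul_le_mul_of_nonneg_right hm1 h7.le]

theorem four_one {γ : ℝ} (hγ : γ ∈ Set.Ioo (0:ℝ) 1) (hdce : ∃ a : ℕ → ℚ, IsDCEApprox a γ)
    (h : ∃ T : SolovayTest, T.Covers γ) : StronglyDCEZeroSpeedable γ := by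
  obtain ⟨a, ha⟩ := hdce
  by_cases hq : ∃ q : ℚ, γ = q
  · exact ⟨a, ha, Or.inl hq⟩
  obtain ⟨T, hT⟩ := h
  have hr0 : ∀ i, 0 ≤ T.r i := fun i => (T.mem_r i).1
  refine ⟨dd T.l T.r a, dd_dce T.comp_l T.comp_r hr0 T.le T.summable ha, Or.inr ?_⟩
  by_contra hcon
  obtain ⟨ε, h1, h2⟩ := EReal.lt_iff_exists_real_btwn.1 (not_le.1 hcon)
  have hε : 0 < ε := by exact_mod_cast h1
  refine absurd h2 (not_lt.2 ?_)
  refine Filter.liminf_le_of_frequently_le' ?_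
  refine (ratio_freq hγ (fun q h => hq ⟨q, h⟩) hr0 T.le T.summable hT ha.1.2.2 hε).mono fun n hn => ?_
  exact_mod_cast hn

theorem dce_speedability_tfae (γ : ℝ) (hγ : γ ∈ Set.Ioo (0 : ℝ) 1)
    (hdce : ∃ a : ℕ → ℚ, IsDCEApprox a γ) :
    List.TFAE
      [StronglyDCEZeroSpeedable γ,
       DCESpeedable γ,
       WeaklyDCESpeedable γ,
       ∃ T : SolovayTest, T.Covers γ] := by
  tfae_have 1 → 2 := one_two
  tfae_have 2 → 3 := two_three
  tfae_have 3 → 4 := three_four hγ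
  tfae_have 4 → 1 := four_one hγ hdce
  tfae_finish
end

section
/- If a d.c.e. real γ is covered by some Solovay test (i.e., γ is not Martin-Löf random), then γ has a d.c.e. approximation {c_s} such that either γ is rational or liminf_{s→∞} |(γ − c_{s+1})/(γ − c_s)| = 0; that is, γ is strongly d.c.e. 0-speedable. -/
open Filter

namespace SpeedAux

open Encodable
theorem le_c {α : Type*} [Primcodable α] {f g : α → ℕ} (hf : Computable f) (hg : Computable g) :
    Computable fun a => decide (f a ≤ g a) := by
  have := (Primrec.nat_le.decide).to_comp.comp hf hg
  exact this
theorem eq_c {α : Type*} [Primcodable α] {f g : α → ℕ} (hf : Computable f) (hg : Computable g) :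
    Computable fun a => decide (f a = g a) := by
  have := ((Primrec.eq (α := ℕ)).decide).to_comp.comp hf hg
  exact this
theorem and_c {α : Type*} [Primcodable α] {p q : α → Prop} [DecidablePred p] [DecidablePred q]
    (hf : Computable fun a => decide (p a)) (hg : Computable fun a => decide (q a)) :
    Computable fun a => decide (p a ∧ q a) := by
  have := (Primrec.and.to_comp.comp hf hg)
  exact this.of_eq fun a => by simp
theorem ite_c {α σ : Type*} [Primcodable α] [Primcodable σ] {p : α → Prop} [DecidablePred p]
    {f g : α → σ}
    (hp : Computable fun a => decide (p a)) (hf : Computable f) (hg : Computable g) :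
    Computable fun a => if p a then f a else g a :=
  (Computable.cond hp hf hg).of_eq fun a => by by_cases h : p a <;> simp [h]
theorem sum_c {α : Type*} [Primcodable α] {g : α → ℕ} {f : α → ℕ → ℕ} (hg : Computable g)
    (hf : Computable₂ f) : Computable fun a => ∑ i ∈ Finset.range (g a), f a i := by
  have h : Computable₂ fun (a : α) (p : ℕ × ℕ) => p.2 + f a p.1 :=
    Primrec.nat_add.to_comp.comp (Computable.snd.comp Computable.snd)
      (hf.comp Computable.fst (Computable.fst.comp Computable.snd))
  refine (Computable.nat_rec hg (Computable.const 0) h).of_eq fun a => ?_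
  induction g a with
  | zero => rfl
  | succ n ih => rw [Finset.sum_range_succ, ← ih]
theorem add_c {α : Type*} [Primcodable α] {f g : α → ℕ} (hf : Computable f) (hg : Computable g) :
    Computable fun a => f a + g a := Primrec.nat_add.to_comp.comp hf hg
theorem sub_c {α : Type*} [Primcodable α] {f g : α → ℕ} (hf : Computable f) (hg : Computable g) :
    Computable fun a => f a - g a := Primrec.nat_sub.to_comp.comp hf hg
theorem mul_c {α : Type*} [Primcodable α] {f g : α → ℕ} (hf : Computable f) (hg : Computable g) :
    Computable fun a => f a * g a := Primrec.nat_mul.to_comp.comp hf hg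
theorem div_c {α : Type*} [Primcodable α] {f g : α → ℕ} (hf : Computable f) (hg : Computable g) :
    Computable fun a => f a / g a := Primrec.nat_div.to_comp.comp hf hg
theorem mod_c {α : Type*} [Primcodable α] {f g : α → ℕ} (hf : Computable f) (hg : Computable g) :
    Computable fun a => f a % g a := Primrec.nat_mod.to_comp.comp hf hg
theorem pow_c {α : Type*} [Primcodable α] {f : α → ℕ} (hf : Computable f) :
    Computable fun a => 2 ^ f a := by
  have h : Computable₂ fun (a : α) (p : ℕ × ℕ) => p.2 * 2 :=
    mul_c (Computable.snd.comp Computable.snd) (Computable.const 2)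
  refine (Computable.nat_rec hf (Computable.const 1) h).of_eq fun a => ?_
  induction f a with
  | zero => rfl
  | succ n ih => rw [pow_succ, ← ih]
/-- total search -/
theorem find_c {α σ : Type*} [Primcodable α] [Primcodable σ] {p : α → ℕ → Prop} [∀ a n, Decidable (p a n)]
    (hp : Computable₂ fun a n => decide (p a n)) (r : α → ℕ) (hr : ∀ a, p a (r a))
    (f : ℕ → σ) (hf : Computable f) (g : α → σ) (hg : ∀ a n, p a n → f n = g a) :
    Computable g := by
  have h1 : Partrec fun a => Nat.rfind (fun n => (Part.some (decide (p a n)) : Part Bool)) :=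
    Partrec.rfind hp.partrec₂
  have h2 := h1.map (g := fun _ n => f n) (hf.comp Computable.snd)
  refine h2.of_eq_tot fun a => ?_
  obtain ⟨n, hn, -⟩ := Nat.rfind_min' (p := fun n => decide (p a n)) (m := r a) (by simpa using hr a)
  have := Nat.rfind_spec hn
  have h3 : true = decide (p a n) := Part.mem_some_iff.1 this
  rw [Part.mem_map_iff]
  exact ⟨n, hn, hg a n (by simpa using h3.symm)⟩

def EQ (q : ℚ) : ℕ := Nat.pair (encode q.num) q.den

theorem EQ_def (q : ℚ) : @encode ℚ Rat.instEncodable q = EQ q := rfl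

def valid (x : ℕ) : Prop :=
  1 ≤ x.unpair.2 ∧ ∑ e ∈ Finset.range (x.unpair.2 + 1),
    (if 2 ≤ e ∧ ((x.unpair.1 + 1) / 2) % e = 0 ∧ x.unpair.2 % e = 0 then 1 else 0) = 0

instance : DecidablePred valid := fun _ => by unfold valid; infer_instance

theorem valid_c {α : Type*} [Primcodable α] {f : α → ℕ} (hf : Computable f) :
    Computable fun a => decide (valid (f a)) := by
  have h1 := Computable.fst.comp (Computable.unpair.comp hf)
  have h2 := Computable.snd.comp (Computable.unpair.comp hf)
  refine and_c (le_c (Computable.const 1) h2) (eq_c (sum_c (add_c h2 (Computable.const 1)) ?_) (Computable.const 0))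
  refine ite_c (and_c (le_c (Computable.const 2) Computable.snd) (and_c (eq_c ?_ (Computable.const 0)) (eq_c ?_ (Computable.const 0)))) (Computable.const 1) (Computable.const 0)
  · exact mod_c (div_c (add_c (h1.comp Computable.fst) (Computable.const 1)) (Computable.const 2)) Computable.snd
  · exact mod_c (h2.comp Computable.fst) Computable.snd

theorem natAbs_dec (z : ℤ) : (encode z + 1) / 2 = z.natAbs := by
  cases z with
  | ofNat n => show (2 * n + 1) / 2 = n; omega
  | negSucc n => show (2 * n + 1 + 1) / 2 = n + 1; omega

theorem valid_iff (x : ℕ) : valid x ↔ ∃ q, EQ q = x := by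
  have key : ∀ m d : ℕ, 1 ≤ d → (∑ e ∈ Finset.range (d + 1),
    (if 2 ≤ e ∧ m % e = 0 ∧ d % e = 0 then 1 else 0) = 0 ↔ m.Coprime d) := by
    intro m d hd
    rw [Finset.sum_eq_zero_iff]
    constructor
    · intro h
      by_contra hc
      have h3 : m.gcd d ∣ d := Nat.gcd_dvd_right m d
      have h4 : m.gcd d ∣ m := Nat.gcd_dvd_left m d
      have h5 := Nat.le_of_dvd hd h3
      have h6 : 0 < m.gcd d := Nat.gcd_pos_of_pos_right _ hd
      have h7 : m.gcd d ≠ 1 := hc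
      have := h (m.gcd d) (by simp; omega)
      rw [if_pos ⟨by omega, Nat.mod_eq_zero_of_dvd h4, Nat.mod_eq_zero_of_dvd h3⟩] at this
      omega
    · intro h e _
      rw [if_neg]
      rintro ⟨h1, h2, h3⟩
      have := Nat.dvd_gcd (Nat.dvd_of_mod_eq_zero h2) (Nat.dvd_of_mod_eq_zero h3)
      rw [h] at this
      have := Nat.le_of_dvd one_pos this
      omega
  constructor
  · rintro ⟨h1, h2⟩
    rw [key _ _ h1] at h2
    obtain ⟨z, hz⟩ : ∃ z : ℤ, encode z = x.unpair.1 := ⟨Denumerable.ofNat ℤ x.unpair.1, Denumerable.encode_ofNat _⟩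
    rw [← hz, natAbs_dec] at h2
    refine ⟨⟨z, x.unpair.2, by omega, h2⟩, ?_⟩
    simp only [EQ]
    rw [hz, Nat.pair_unpair]
  · rintro ⟨q, rfl⟩
    have : (EQ q).unpair = (encode q.num, q.den) := by simp [EQ]
    unfold valid
    rw [this]
    refine ⟨q.pos, ?_⟩
    rw [key _ _ q.pos]
    simp only [natAbs_dec]
    exact q.reduced

def cnt (x : ℕ) : ℕ := ∑ y ∈ Finset.range x, if valid y then 1 else 0

def cq (q : ℚ) : ℕ := @encode ℚ (Primcodable.toEncodable) q

theorem cq_c : Computable cq := Computable.encode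

theorem cq_inj {q q' : ℚ} (h : cq q = cq q') : q = q' :=
  @encode_injective ℚ (Primcodable.toEncodable) _ _ h

theorem ofNat_cq (q : ℚ) : Denumerable.ofNat ℚ (cq q) = q := Denumerable.ofNat_encode q

theorem encode_rat (q : ℚ) : cq q = cnt (EQ q) := by
  have h : cq q = (List.range (EQ q)).countP (fun x => @decide (x ∈ Set.range (@encode ℚ Rat.instEncodable)) (@decidableRangeEncode ℚ Rat.instEncodable x)) := rfl
  rw [h]
  have : (fun x => @decide (x ∈ Set.range (@encode ℚ Rat.instEncodable)) (@decidableRangeEncode ℚ Rat.instEncodable x)) = fun x => decide (valid x) := by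
    funext x
    rw [decide_eq_decide, valid_iff]; rfl
  rw [this, cnt]
  induction EQ q with
  | zero => rfl
  | succ n ih => rw [Finset.sum_range_succ, List.range_succ, List.countP_append, ih]; simp [List.countP_cons]

theorem EQ_c : Computable EQ := by
  refine find_c (p := fun q n => valid n ∧ cnt n = cq q) ?_ EQ ?_ id Computable.id EQ ?_
  · refine and_c (valid_c Computable.snd) (eq_c (sum_c Computable.snd ?_) (cq_c.comp Computable.fst))
    exact ite_c (valid_c Computable.snd) (Computable.const 1) (Computable.const 0)
  · intro q
    exact ⟨(valid_iff _).2 ⟨q, rfl⟩, (encode_rat q).symm⟩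
  · rintro q n ⟨h1, h2⟩
    obtain ⟨q', rfl⟩ := (valid_iff _).1 h1
    rw [← encode_rat] at h2
    rw [cq_inj h2]; rfl

theorem den_c : Computable Rat.den := by
  refine (Computable.snd.comp (Computable.unpair.comp EQ_c)).of_eq fun q => ?_
  simp [EQ]

theorem natAbs_c : Computable fun q : ℚ => q.num.natAbs := by
  refine (div_c (add_c (Computable.fst.comp (Computable.unpair.comp EQ_c)) (Computable.const 1)) (Computable.const 2)).of_eq fun q => ?_
  simp [EQ, natAbs_dec]

theorem enc_c : Computable fun q : ℚ => (encode q.num) := by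
  refine (Computable.fst.comp (Computable.unpair.comp EQ_c)).of_eq fun q => ?_
  simp [EQ]

theorem mk_c {α : Type*} [Primcodable α] {f g : α → ℕ} (hf : Computable f) (hg : Computable g)
    (h0 : ∀ a, g a ≠ 0) :
    Computable fun a => (f a : ℚ) / (g a : ℚ) := by
  have hq := Computable.ofNat ℚ
  refine find_c (p := fun a n => encode (Denumerable.ofNat ℚ n).num % 2 = 0 ∧
    (Denumerable.ofNat ℚ n).num.natAbs * g a = f a * (Denumerable.ofNat ℚ n).den) ?_
    (fun a => cq ((f a : ℚ) / (g a : ℚ))) ?_ (fun n => Denumerable.ofNat ℚ n) hq _ ?_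
  · refine and_c (eq_c (mod_c (enc_c.comp (hq.comp Computable.snd)) (Computable.const 2)) (Computable.const 0))
      (eq_c (mul_c (natAbs_c.comp (hq.comp Computable.snd)) (hg.comp Computable.fst))
       (mul_c (hf.comp Computable.fst) (den_c.comp (hq.comp Computable.snd))))
  · intro a
    have h1 : (0:ℚ) < g a := by exact_mod_cast Nat.pos_of_ne_zero (h0 a)
    rw [ofNat_cq]
    set q : ℚ := (f a : ℚ) / (g a : ℚ) with hq
    have h2 : (0:ℚ) ≤ q := by positivity
    have h3 : 0 ≤ q.num := Rat.num_nonneg.2 h2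
    obtain ⟨n, hn⟩ := Int.eq_ofNat_of_zero_le h3
    constructor
    · rw [hn]
      show (2 * n) % 2 = 0
      omega
    · have h4 : q * g a = f a := by rw [hq]; field_simp
      rw [hn]
      have h5 : q = n / q.den := by
        conv_lhs => rw [← Rat.num_div_den q, hn]
        simp
      have h6 : (q.den : ℚ) ≠ 0 := by simp
      have h7 : (n : ℚ) * g a = f a * q.den := by
        rw [← h4]
        have : (n : ℚ) = q * q.den := by
          rw [eq_div_iff h6] at h5; exact h5.symm
        rw [this]; ring
      simp only [Int.natAbs_natCast]
      exact_mod_cast h7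
  · intro a n
    generalize Denumerable.ofNat ℚ n = q
    rintro ⟨h1, h2⟩
    have hg : (g a : ℚ) ≠ 0 := by exact_mod_cast h0 a
    have h6 : (q.den : ℚ) ≠ 0 := by simp
    have h3 : ((q.num.natAbs : ℕ) : ℚ) = (q.num : ℚ) := by
      cases hz : q.num with
      | ofNat n => simp
      | negSucc n =>
        rw [hz] at h1
        change (2 * n + 1) % 2 = 0 at h1
        omega
    have h7 : (q.num : ℚ) * g a = f a * q.den := by
      rw [← h3]; exact_mod_cast h2
    rw [eq_div_iff hg]
    conv_lhs => rw [← Rat.num_div_den q]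
    field_simp
    linarith
def WW (n : ℕ) : ℕ := Nat.sqrt n * Nat.sqrt n

theorem sqrt_c : Computable Nat.sqrt := by
  refine find_c (p := fun a n => n * n ≤ a ∧ a + 1 ≤ (n + 1) * (n + 1)) ?_ Nat.sqrt ?_ id
    Computable.id Nat.sqrt ?_
  · refine and_c (le_c (mul_c Computable.snd Computable.snd) Computable.fst)
      (le_c (add_c Computable.fst (Computable.const 1)) (mul_c ?_ ?_)) <;>
    exact add_c Computable.snd (Computable.const 1)
  · intro a
    exact ⟨Nat.sqrt_le a, Nat.lt_succ_sqrt a⟩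
  · rintro a n ⟨h1, h2⟩
    exact (Nat.eq_sqrt.2 ⟨h1, h2⟩)

theorem WW_c : Computable WW := mul_c sqrt_c sqrt_c

theorem WW_mono : Monotone WW := fun _ _ h => Nat.mul_le_mul (Nat.sqrt_le_sqrt h) (Nat.sqrt_le_sqrt h)

theorem WW_le (n : ℕ) : WW n ≤ n := Nat.sqrt_le n

theorem WW_jump (m : ℕ) (hm : 1 ≤ m) : m ≤ WW (m * m) - WW (m * m - 1) := by
  have h1 : Nat.sqrt (m * m) = m := Nat.sqrt_eq m
  have h0 : 0 < m * m := by positivity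
  have h2 : Nat.sqrt (m * m - 1) < m := by
    rw [Nat.sqrt_lt]; omega
  obtain ⟨k, rfl⟩ : ∃ k, m = k + 1 := ⟨m - 1, by omega⟩
  unfold WW
  rw [h1]
  have h3 : Nat.sqrt ((k + 1) * (k + 1) - 1) ≤ k := by omega
  have h4 := Nat.mul_le_mul h3 h3
  have h5 : (k + 1) * (k + 1) = k * k + k + (k + 1) := by ring
  omega

def NN (χ : ℕ → ℕ → ℕ) (i k : ℕ) : ℕ := ∑ j ∈ Finset.range i, χ j (k / 2 ^ (i - j))

theorem NN_succ (χ : ℕ → ℕ → ℕ) (i k : ℕ) :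
    NN χ (i + 1) k = NN χ i (k / 2) + χ i (k / 2) := by
  unfold NN
  rw [Finset.sum_range_succ]
  congr 1
  · refine Finset.sum_congr rfl fun j hj => ?_
    rw [Finset.mem_range] at hj
    rw [Nat.div_div_eq_div_mul, ← pow_succ']
    congr 3
    omega
  · simp

theorem NN_le (χ : ℕ → ℕ → ℕ) (h : ∀ i k, χ i k ≤ 1) (i k : ℕ) : NN χ i k ≤ i := by
  unfold NN
  refine (Finset.sum_le_card_nsmul _ _ 1 fun j _ => h _ _).trans ?_
  simp

theorem sum_half (f : ℕ → ℝ) (n : ℕ) :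
    ∑ k ∈ Finset.range (2 * n), f (k / 2) = 2 * ∑ k ∈ Finset.range n, f k := by
  induction n with
  | zero => simp
  | succ n ih =>
    rw [show 2 * (n + 1) = 2 * n + 1 + 1 by ring, Finset.sum_range_succ, Finset.sum_range_succ, ih,
      Finset.sum_range_succ, show (2 * n + 1) / 2 = n by omega, show (2 * n) / 2 = n by omega]
    ring

theorem tele (χ : ℕ → ℕ → ℕ) (V : ℕ → ℝ) (hV : V 0 = 0) (n : ℕ) :
    ∑ i ∈ Finset.range n, ∑ k ∈ Finset.range (2 ^ (i + 1)),
      (V (NN χ i k + χ i k) - V (NN χ i k)) / 2 ^ i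
    = (∑ k ∈ Finset.range (2 ^ (n + 1)), V (NN χ n k)) / 2 ^ n := by
  induction n with
  | zero => simp [NN, hV]
  | succ n ih =>
    rw [Finset.sum_range_succ, ih, pow_succ' 2 (n + 1)]
    simp_rw [NN_succ]
    rw [sum_half (fun k => V (NN χ n k + χ n k)), ← Finset.sum_div, Finset.sum_sub_distrib]
    field_simp
    ring

def gg (χ : ℕ → ℕ → ℕ) (i k : ℕ) : ℕ := WW (NN χ i k + χ i k) - WW (NN χ i k)

theorem gg_sum_le (χ : ℕ → ℕ → ℕ) (n : ℕ) :
    ∑ i ∈ Finset.range n, ∑ k ∈ Finset.range (2 ^ (i + 1)), (gg χ i k : ℝ) / 2 ^ i ≤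
    ∑ i ∈ Finset.range n, (∑ k ∈ Finset.range (2 ^ (i + 1)), (χ i k : ℝ)) / 2 ^ i := by
  have h1 := tele χ (fun n => (WW n : ℝ)) (by simp [WW]) n
  have h2 := tele χ (fun n => (n : ℝ)) (by simp) n
  have e1 : ∑ i ∈ Finset.range n, ∑ k ∈ Finset.range (2 ^ (i + 1)), (gg χ i k : ℝ) / 2 ^ i =
    (∑ k ∈ Finset.range (2 ^ (n + 1)), (WW (NN χ n k) : ℝ)) / 2 ^ n := by
    rw [← h1]
    refine Finset.sum_congr rfl fun i _ => Finset.sum_congr rfl fun k _ => ?_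
    unfold gg
    rw [Nat.cast_sub (WW_mono (by omega))]
  have e2 : ∑ i ∈ Finset.range n, (∑ k ∈ Finset.range (2 ^ (i + 1)), (χ i k : ℝ)) / 2 ^ i =
    (∑ k ∈ Finset.range (2 ^ (n + 1)), (NN χ n k : ℝ)) / 2 ^ n := by
    rw [← h2]
    refine Finset.sum_congr rfl fun i _ => ?_
    rw [Finset.sum_div]
    refine Finset.sum_congr rfl fun k _ => ?_
    push_cast; ring
  rw [e1, e2]
  gcongr with k
  exact WW_le _

theorem gg_le (χ : ℕ → ℕ → ℕ) (h : ∀ i k, χ i k ≤ 1) (i k : ℕ) : gg χ i k ≤ 2 ^ i := by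
  have h1 := NN_le χ h i k
  have h2 := WW_le (NN χ i k + χ i k)
  have h3 := h i k
  have h4 : i < 2 ^ i := Nat.lt_two_pow_self
  unfold gg
  omega

def chi (l r : ℕ → ℚ) (i k : ℕ) : ℕ :=
  if (l i).num.natAbs * 2 ^ i ≤ (k + 1) * (l i).den ∧ k * (r i).den ≤ (r i).num.natAbs * 2 ^ i
  then 1 else 0

theorem chi_le (l r : ℕ → ℚ) (i k : ℕ) : chi l r i k ≤ 1 := by
  unfold chi; split_ifs <;> omega

theorem cast_nn (q : ℚ) (hq : 0 ≤ q) : (q : ℝ) = (q.num.natAbs : ℝ) / (q.den : ℝ) := by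
  have h3 : 0 ≤ q.num := Rat.num_nonneg.2 hq
  obtain ⟨n, hn⟩ := Int.eq_ofNat_of_zero_le h3
  have : q = (n : ℚ) / q.den := by
    conv_lhs => rw [← Rat.num_div_den q, hn]
    simp
  rw [hn]
  conv_lhs => rw [this]
  simp

theorem chi_iff (l r : ℕ → ℚ) (i k : ℕ) (hl : 0 ≤ l i) (hr : 0 ≤ r i) :
    ((l i).num.natAbs * 2 ^ i ≤ (k + 1) * (l i).den ∧ k * (r i).den ≤ (r i).num.natAbs * 2 ^ i) ↔
    ((l i : ℝ) * 2 ^ i - 1 ≤ k ∧ (k : ℝ) ≤ r i * 2 ^ i) := by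
  have h1 : (0 : ℝ) < (l i).den := by exact_mod_cast (l i).pos
  have h2 : (0 : ℝ) < (r i).den := by exact_mod_cast (r i).pos
  rw [cast_nn _ hl, cast_nn _ hr, sub_le_iff_le_add, div_mul_eq_mul_div, div_mul_eq_mul_div,
    div_le_iff₀ h1, le_div_iff₀ h2]
  norm_cast

theorem chi_sum (l r : ℕ → ℚ) (i n : ℕ) (hl : 0 ≤ l i) (hlr : l i ≤ r i) :
    ∑ k ∈ Finset.range n, (chi l r i k : ℝ) ≤ (r i - l i) * 2 ^ i + 2 := by
  have hr := hl.trans hlr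
  have e : ∑ k ∈ Finset.range n, (chi l r i k : ℝ) =
      (((Finset.range n).filter fun k => ((l i).num.natAbs * 2 ^ i ≤ (k + 1) * (l i).den ∧ k * (r i).den ≤ (r i).num.natAbs * 2 ^ i)).card : ℝ) := by
    rw [Finset.card_filter]
    push_cast
    refine Finset.sum_congr rfl fun k _ => ?_
    unfold chi
    split_ifs <;> simp
  rw [e]
  have hrr : (0:ℝ) ≤ r i := by exact_mod_cast hr
  have hlr' : (l i : ℝ) ≤ r i := by exact_mod_cast hlr
  have hs : ((Finset.range n).filter fun k => ((l i).num.natAbs * 2 ^ i ≤ (k + 1) * (l i).den ∧ k * (r i).den ≤ (r i).num.natAbs * 2 ^ i)) ⊆ Finset.Icc ⌈(l i : ℝ) * 2 ^ i - 1⌉₊ ⌊(r i : ℝ) * 2 ^ i⌋₊ := by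
    intro k hk
    rw [Finset.mem_filter, chi_iff l r i k hl hr] at hk
    rw [Finset.mem_Icc, Nat.ceil_le]
    exact ⟨hk.2.1, Nat.le_floor hk.2.2⟩
  have hc := Finset.card_le_card hs
  rw [Nat.card_Icc] at hc
  have h1 : (⌊(r i : ℝ) * 2 ^ i⌋₊ : ℝ) ≤ r i * 2 ^ i := Nat.floor_le (by positivity)
  have h2 := Nat.le_ceil ((l i : ℝ) * 2 ^ i - 1)
  have h3 : (0:ℝ) ≤ (r i - l i) * 2 ^ i := mul_nonneg (by linarith) (by positivity)
  refine (Nat.cast_le.2 hc).trans ?_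
  by_cases hle : ⌈(l i : ℝ) * 2 ^ i - 1⌉₊ ≤ ⌊(r i : ℝ) * 2 ^ i⌋₊ + 1
  · rw [Nat.cast_sub hle]
    push_cast
    linarith
  · rw [Nat.sub_eq_zero_of_le (by omega)]
    push_cast
    linarith

def fl (i : ℕ) (q : ℚ) : ℕ := q.num.natAbs * 2 ^ i / q.den

theorem fl_eq (i : ℕ) (q : ℚ) (hq : 0 ≤ q) : fl i q = ⌊(q : ℝ) * 2 ^ i⌋₊ := by
  rw [cast_nn q hq, div_mul_eq_mul_div, Nat.floor_div_natCast]
  unfold fl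
  congr 1
  rw [show (q.num.natAbs : ℝ) * 2 ^ i = ((q.num.natAbs * 2 ^ i : ℕ) : ℝ) by push_cast; ring, Nat.floor_natCast]

def idx (N : ℕ) : ℕ := N.unpair.1

def old (a : ℕ → ℚ) (N : ℕ) : ℕ := ∑ M ∈ Finset.range N,
  if idx M = idx N ∧ fl (idx N) (a M) = fl (idx N) (a N) then 1 else 0

def dd (χ : ℕ → ℕ → ℕ) (a : ℕ → ℚ) (N : ℕ) : ℕ :=
  if old a N = 0 then gg χ (idx N) (fl (idx N) (a N)) else 0

def cc (χ : ℕ → ℕ → ℕ) (a : ℕ → ℚ) (s : ℕ) : ℚ :=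
  (((a (s / 2)).num.natAbs * (2 ^ (idx (s / 2)) - (if s % 2 = 0 then dd χ a (s / 2) else 0)) : ℕ) : ℚ)
    / (((a (s / 2)).den * 2 ^ idx (s / 2) : ℕ) : ℚ)

theorem chi_c (l r : ℕ → ℚ) (hl : Computable l) (hr : Computable r) : Computable₂ (chi l r) := by
  have h1 := natAbs_c.comp hl
  have h2 := natAbs_c.comp hr
  have h3 := den_c.comp hl
  have h4 := den_c.comp hr
  have hp : Computable fun p : ℕ × ℕ => 2 ^ p.1 := pow_c Computable.fst
  refine ite_c (and_c (le_c (mul_c (h1.comp Computable.fst) hp) (mul_c (add_c Computable.snd (Computable.const 1)) (h3.comp Computable.fst)))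
    (le_c (mul_c Computable.snd (h4.comp Computable.fst)) (mul_c (h2.comp Computable.fst) hp))) (Computable.const 1) (Computable.const 0)

theorem NN_c (χ : ℕ → ℕ → ℕ) (h : Computable₂ χ) : Computable₂ (NN χ) := by
  refine sum_c (α := ℕ × ℕ) (f := fun p j => χ j (p.2 / 2 ^ (p.1 - j))) Computable.fst ?_
  refine h.comp Computable.snd (div_c (Computable.snd.comp Computable.fst) (pow_c (sub_c (Computable.fst.comp Computable.fst) Computable.snd)))

theorem gg_c (χ : ℕ → ℕ → ℕ) (h : Computable₂ χ) : Computable₂ (gg χ) := by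
  have h1 : Computable fun p : ℕ × ℕ => NN χ p.1 p.2 := NN_c χ h
  have h2 : Computable fun p : ℕ × ℕ => χ p.1 p.2 := h
  exact sub_c (WW_c.comp (add_c h1 h2)) (WW_c.comp h1)

theorem fl_c : Computable₂ fl :=
  div_c (mul_c (natAbs_c.comp Computable.snd) (pow_c Computable.fst)) (den_c.comp Computable.snd)

theorem idx_c : Computable idx := Computable.fst.comp Computable.unpair

theorem dd_c (χ : ℕ → ℕ → ℕ) (h : Computable₂ χ) (a : ℕ → ℚ) (ha : Computable a) :
    Computable (dd χ a) := by
  have h1 : Computable fun N => fl (idx N) (a N) := fl_c.comp idx_c ha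
  refine ite_c (eq_c (sum_c Computable.id ?_) (Computable.const 0)) ((gg_c χ h).comp idx_c h1) (Computable.const 0)
  refine ite_c (and_c (eq_c (idx_c.comp Computable.snd) (idx_c.comp Computable.fst))
    (eq_c (fl_c.comp (idx_c.comp Computable.fst) (ha.comp Computable.snd)) (h1.comp Computable.fst))) (Computable.const 1) (Computable.const 0)

theorem cc_c (χ : ℕ → ℕ → ℕ) (h : Computable₂ χ) (a : ℕ → ℚ) (ha : Computable a) :
    Computable (cc χ a) := by
  have h2 : Computable fun s : ℕ => s / 2 := div_c Computable.id (Computable.const 2)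
  have hp : Computable fun s : ℕ => 2 ^ idx (s / 2) := pow_c (idx_c.comp h2)
  refine mk_c (mul_c (natAbs_c.comp (ha.comp h2)) (sub_c hp (ite_c (eq_c (mod_c Computable.id (Computable.const 2)) (Computable.const 0)) ((dd_c χ h a ha).comp h2) (Computable.const 0))))
    (mul_c (den_c.comp (ha.comp h2)) hp) ?_
  intro s
  have := (a (s / 2)).pos
  positivity

theorem dd_le (χ : ℕ → ℕ → ℕ) (h : ∀ i k, χ i k ≤ 1) (a : ℕ → ℚ) (N : ℕ) :
    dd χ a N ≤ 2 ^ idx N := by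
  unfold dd
  split_ifs
  · exact gg_le χ h _ _
  · exact Nat.zero_le _

theorem cc_even (χ : ℕ → ℕ → ℕ) (h : ∀ i k, χ i k ≤ 1) (a : ℕ → ℚ) (N : ℕ) (ha : 0 ≤ a N) :
    (cc χ a (2 * N) : ℝ) = a N * (1 - (dd χ a N : ℝ) / 2 ^ idx N) := by
  have h1 : (0 : ℝ) < (a N).den := by exact_mod_cast (a N).pos
  unfold cc
  rw [show 2 * N / 2 = N by omega, if_pos (by omega), cast_nn _ ha]
  rw [Rat.cast_div, Rat.cast_natCast, Rat.cast_natCast, Nat.cast_mul, Nat.cast_mul,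
    Nat.cast_sub (dd_le χ h a N)]
  push_cast
  field_simp

theorem cc_odd (χ : ℕ → ℕ → ℕ) (a : ℕ → ℚ) (N : ℕ) (ha : 0 ≤ a N) :
    (cc χ a (2 * N + 1) : ℝ) = a N := by
  have h1 : (0 : ℝ) < (a N).den := by exact_mod_cast (a N).pos
  unfold cc
  rw [show (2 * N + 1) / 2 = N by omega, if_neg (by omega), cast_nn _ ha]
  push_cast
  rw [Nat.sub_zero]
  push_cast
  field_simp

theorem dd_sum_le (χ : ℕ → ℕ → ℕ) (a : ℕ → ℚ) (ha : ∀ N, 0 ≤ a N ∧ a N ≤ 1) (M : ℕ) :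
    ∑ N ∈ Finset.range M, (dd χ a N : ℝ) / 2 ^ idx N ≤
    ∑ i ∈ Finset.range M, ∑ k ∈ Finset.range (2 ^ (i + 1)), (gg χ i k : ℝ) / 2 ^ i := by
  let φ : ℕ → (_ : ℕ) × ℕ := fun N => ⟨idx N, fl (idx N) (a N)⟩
  let H : (_ : ℕ) × ℕ → ℝ := fun x => (gg χ x.1 x.2 : ℝ) / 2 ^ x.1
  rw [← Finset.sum_sigma (Finset.range M) (fun i => Finset.range (2 ^ (i + 1))) H]
  have e1 : ∑ N ∈ Finset.range M, (dd χ a N : ℝ) / 2 ^ idx N =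
      ∑ N ∈ (Finset.range M).filter (fun N => old a N = 0), H (φ N) := by
    rw [Finset.sum_filter]
    refine Finset.sum_congr rfl fun N _ => ?_
    unfold dd
    split_ifs <;> simp [H, φ]
  have key : ∀ N N', N < N' → old a N' = 0 → φ N ≠ φ N' := by
    intro N N' hlt h0 he
    have h1 : idx N = idx N' := congrArg Sigma.fst he
    have h2 : fl (idx N) (a N) = fl (idx N') (a N') := congrArg Sigma.snd he
    unfold old at h0
    rw [Finset.sum_eq_zero_iff] at h0
    have := h0 N (Finset.mem_range.2 hlt)
    rw [if_pos ⟨h1, by rw [← h1] at h2 ⊢; exact h2⟩] at this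
    omega
  rw [e1, ← Finset.sum_image (f := H) (g := φ)]
  · refine Finset.sum_le_sum_of_subset_of_nonneg ?_ fun x _ _ => by simp only [H]; positivity
    intro x hx
    rw [Finset.mem_image] at hx
    obtain ⟨N, hN, rfl⟩ := hx
    rw [Finset.mem_filter, Finset.mem_range] at hN
    rw [Finset.mem_sigma, Finset.mem_range, Finset.mem_range]
    refine ⟨lt_of_le_of_lt (Nat.unpair_left_le N) hN.1, ?_⟩
    simp only [φ]
    rw [fl_eq _ _ (ha N).1, pow_succ]
    have h1 : (a N : ℝ) ≤ 1 := by exact_mod_cast (ha N).2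
    have h0 : (0:ℝ) ≤ a N := by exact_mod_cast (ha N).1
    rw [Nat.floor_lt (by positivity)]
    push_cast
    have : (0:ℝ) < 2 ^ idx N := by positivity
    nlinarith
  · intro N hN N' hN' he
    simp only [Finset.coe_filter, Set.mem_ofPred_eq] at hN hN'
    rcases lt_trichotomy N N' with h | h | h
    · exact absurd he (key _ _ h hN'.2)
    · exact h
    · exact absurd he.symm (key _ _ h hN.2)

theorem dd_summable (T : SolovayTest) (a : ℕ → ℚ) (ha : ∀ N, 0 ≤ a N ∧ a N ≤ 1) :
    Summable fun N => (dd (chi T.l T.r) a N : ℝ) / 2 ^ idx N := by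
  have hs : Summable fun i => ((T.r i : ℝ) - T.l i) + 2 * (1 / 2 : ℝ) ^ i :=
    T.summable.add (summable_geometric_two.mul_left 2)
  refine summable_of_sum_range_le (c := ∑' i, (((T.r i : ℝ) - T.l i) + 2 * (1 / 2 : ℝ) ^ i))
    (fun N => by positivity) fun M => ?_
  refine (dd_sum_le _ a ha M).trans ((gg_sum_le _ M).trans ?_)
  have hnn : ∀ i, 0 ≤ ((T.r i : ℝ) - T.l i) + 2 * (1 / 2 : ℝ) ^ i := fun i => by
    have : (T.l i : ℝ) ≤ T.r i := by exact_mod_cast T.le i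
    have : (0:ℝ) ≤ 2 * (1 / 2 : ℝ) ^ i := by positivity
    linarith
  refine le_trans (Finset.sum_le_sum fun i _ => ?_) (hs.sum_le_tsum (Finset.range M) fun i _ => hnn i)
  have := chi_sum T.l T.r i (2 ^ (i + 1)) (T.mem_l i).1 (T.le i)
  rw [div_le_iff₀ (by positivity)]
  refine this.trans (le_of_eq ?_)
  rw [add_mul, mul_assoc, ← mul_pow]
  norm_num

theorem floor_half (γ : ℝ) (i : ℕ) : ⌊γ * 2 ^ (i + 1)⌋₊ / 2 = ⌊γ * 2 ^ i⌋₊ := by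
  rw [← Nat.floor_div_ofNat]
  congr 1
  rw [pow_succ]; field_simp

theorem jump_exists (T : SolovayTest) (γ : ℝ) (hγ : 0 < γ) (hT : T.Covers γ) (m : ℕ) (hm : 1 ≤ m) :
    ∃ i, m ≤ i + 1 ∧ m ≤ gg (chi T.l T.r) i ⌊γ * 2 ^ i⌋₊ := by
  set χ := chi T.l T.r
  let n : ℕ → ℕ := fun i => NN χ i ⌊γ * 2 ^ i⌋₊
  have hn : ∀ i, n (i + 1) = n i + χ i ⌊γ * 2 ^ i⌋₊ := by
    intro i
    simp only [n]
    rw [NN_succ, floor_half]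
  have hmono : Monotone n := monotone_nat_of_le_succ fun i => by rw [hn]; omega
  have hone : ∀ i, γ ∈ Set.Icc (T.l i : ℝ) (T.r i : ℝ) → χ i ⌊γ * 2 ^ i⌋₊ = 1 := by
    intro i hi
    simp only [χ]
    unfold chi
    rw [if_pos]
    rw [chi_iff _ _ _ _ (T.mem_l i).1 (T.mem_r i).1]
    have hp : (0:ℝ) < 2 ^ i := by positivity
    have h1 := Nat.lt_floor_add_one (γ * 2 ^ i)
    have h2 := Nat.floor_le (a := γ * 2 ^ i) (by positivity)
    constructor
    · nlinarith [mul_le_mul_of_nonneg_right hi.1 hp.le]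
    · nlinarith [mul_le_mul_of_nonneg_right hi.2 hp.le]
  have hunb : ∀ B, ∃ i, B ≤ n i := by
    intro B
    induction B with
    | zero => exact ⟨0, Nat.zero_le _⟩
    | succ B ih =>
      obtain ⟨i, hi⟩ := ih
      obtain ⟨j, hj, hj'⟩ := (Filter.frequently_atTop.1 hT) i
      refine ⟨j + 1, ?_⟩
      rw [hn, hone j hj']
      have := hmono hj
      omega
  have hex := hunb (m * m)
  have hmm : m ≤ m * m := Nat.le_mul_self m
  classical
  have hsp := Nat.find_spec hex
  obtain ⟨j, hj⟩ : ∃ j, Nat.find hex = j + 1 := by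
    refine ⟨Nat.find hex - 1, ?_⟩
    have : Nat.find hex ≠ 0 := by
      intro h0
      rw [h0] at hsp
      simp [n, NN] at hsp
      omega
    omega
  rw [hj] at hsp
  have hlt : n j < m * m := not_le.1 (Nat.find_min hex (by omega))
  have hle := chi_le T.l T.r j ⌊γ * 2 ^ j⌋₊
  have hnj := hn j
  have hNj := NN_le χ (chi_le T.l T.r) j ⌊γ * 2 ^ j⌋₊
  refine ⟨j, ?_, ?_⟩
  · simp only [n, χ] at *; omega
  · unfold gg
    have e1 : NN χ j ⌊γ * 2 ^ j⌋₊ + χ j ⌊γ * 2 ^ j⌋₊ = m * m := by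
      simp only [n, χ] at *; omega
    have e2 : NN χ j ⌊γ * 2 ^ j⌋₊ = m * m - 1 := by
      simp only [n, χ] at *; omega
    rw [e1, e2]
    exact WW_jump m hm

theorem stage_exists (χ : ℕ → ℕ → ℕ) (γ : ℝ) (hγ : 0 < γ) (hirr : ¬ ∃ q : ℚ, γ = q) (a : ℕ → ℚ)
    (ha : ∀ N, 0 ≤ a N) (hlim : Tendsto (fun s => (a s : ℝ)) atTop (nhds γ)) (i : ℕ) :
    ∃ N, idx N = i ∧ fl i (a N) = ⌊γ * 2 ^ i⌋₊ ∧ dd χ a N = gg χ i ⌊γ * 2 ^ i⌋₊ := by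
  have hp : (0:ℝ) < 2 ^ i := by positivity
  have hev : ∀ᶠ N in atTop, fl i (a N) = ⌊γ * 2 ^ i⌋₊ := by
    have h1 : Tendsto (fun s => (a s : ℝ) * 2 ^ i) atTop (nhds (γ * 2 ^ i)) := hlim.mul_const _
    have h2 : (⌊γ * 2 ^ i⌋₊ : ℝ) < γ * 2 ^ i := by
      refine lt_of_le_of_ne (Nat.floor_le (by positivity)) fun h => hirr ?_
      refine ⟨(⌊γ * 2 ^ i⌋₊ : ℚ) / 2 ^ i, ?_⟩
      rw [Rat.cast_div, Rat.cast_natCast, h]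
      push_cast
      field_simp
    filter_upwards [h1.eventually (lt_mem_nhds h2), h1.eventually (gt_mem_nhds (Nat.lt_floor_add_one _))] with N hN hN'
    rw [fl_eq _ _ (ha N), Nat.floor_eq_iff (by have := ha N; have : (0:ℝ) ≤ a N := by exact_mod_cast this
                                               positivity)]
    exact ⟨hN.le, hN'⟩
  have hex : ∃ N, idx N = i ∧ fl i (a N) = ⌊γ * 2 ^ i⌋₊ := by
    obtain ⟨N0, h0⟩ := eventually_atTop.1 hev
    refine ⟨Nat.pair i N0, by simp [idx], h0 _ (Nat.right_le_pair i N0)⟩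
  classical
  obtain ⟨h1, h2⟩ := Nat.find_spec hex
  refine ⟨Nat.find hex, h1, h2, ?_⟩
  unfold dd
  rw [if_pos, h1, h2]
  unfold old
  rw [Finset.sum_eq_zero_iff]
  intro M hM
  rw [Finset.mem_range] at hM
  rw [if_neg]
  rintro ⟨h3, h4⟩
  rw [h1] at h3 h4
  exact Nat.find_min hex hM ⟨h3, h4.trans h2⟩

theorem ratio_bound (γ x δ : ℝ) (w e : ℝ) (hγ : 0 < γ) (he : 0 < e)
    (hx : |γ - x| ≤ e) (hxx : γ / 2 ≤ x) (hδ : w * e ≤ δ) (hw : 1 < γ / 2 * w) :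
    |(γ - x) / (γ - x * (1 - δ))| ≤ 1 / (γ / 2 * w - 1) := by
  have hw0 : 0 < w := by
    by_contra h
    have : γ / 2 * w ≤ 0 := mul_nonpos_of_nonneg_of_nonpos (by positivity) (not_lt.1 h)
    linarith
  have hδ0 : 0 ≤ δ := le_trans (by positivity) hδ
  have h1 : (γ / 2 * w - 1) * e ≤ γ - x * (1 - δ) := by
    have h2 : γ / 2 * (w * e) ≤ x * δ := mul_le_mul hxx hδ (by positivity) (by linarith)
    have h3 := (abs_le.1 hx).1
    nlinarith
  have hp : 0 < (γ / 2 * w - 1) * e := mul_pos (by linarith) he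
  rw [abs_div, div_le_div_iff₀ (by rw [abs_pos]; linarith) (by linarith), abs_of_pos (by linarith : 0 < γ - x * (1 - δ))]
  have : |γ - x| * (γ / 2 * w - 1) ≤ e * (γ / 2 * w - 1) := mul_le_mul_of_nonneg_right hx (by linarith)
  linarith

theorem summable_eo (f : ℕ → ℝ) (h0 : Summable fun N => f (2 * N)) (h1 : Summable fun N => f (2 * N + 1)) :
    Summable f := (h0.hasSum.even_add_odd h1.hasSum).summable

end SpeedAux

open SpeedAux in
theorem nonrandom_dce_implies_strongly_zero_speedable (γ : ℝ)
    (hγ : γ ∈ Set.Ioo (0 : ℝ) 1)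
    (hdce : ∃ a : ℕ → ℚ, IsDCEApprox a γ)
    (hcov : ∃ T : SolovayTest, T.Covers γ) :
    ∃ c : ℕ → ℚ, IsDCEApprox c γ ∧
      ((∃ q : ℚ, γ = (q : ℝ)) ∨
        Filter.liminf
          (fun s => ((|(γ - (c (s + 1) : ℝ)) / (γ - (c s : ℝ))| : ℝ) : EReal)) atTop
          = (0 : EReal)) := by
  obtain ⟨a, ha⟩ := hdce
  obtain ⟨T, hT⟩ := hcov
  by_cases hirr : ∃ q : ℚ, γ = (q : ℝ)
  · exact ⟨a, ha, Or.inl hirr⟩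
  obtain ⟨⟨hac, ha01, hlim⟩, hvar⟩ := ha
  have hγ0 : 0 < γ := hγ.1
  have ha0 : ∀ N, 0 ≤ a N := fun N => (ha01 N).1
  have hr0 : ∀ N, (0:ℝ) ≤ a N := fun N => by exact_mod_cast ha0 N
  have hr1 : ∀ N, (a N : ℝ) ≤ 1 := fun N => by exact_mod_cast (ha01 N).2
  set χ := chi T.l T.r with hχ
  have hχ1 : ∀ i k, χ i k ≤ 1 := chi_le T.l T.r
  set δ : ℕ → ℝ := fun N => (dd χ a N : ℝ) / 2 ^ idx N with hδ
  have hδs : Summable δ := dd_summable T a ha01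
  have hδ0 : ∀ N, 0 ≤ δ N := fun N => by simp only [hδ]; positivity
  have hδ1 : ∀ N, δ N ≤ 1 := fun N => by
    simp only [hδ]
    rw [div_le_one (by positivity)]
    exact_mod_cast dd_le χ hχ1 a N
  have hce : ∀ N, (cc χ a (2 * N) : ℝ) = a N * (1 - δ N) := fun N => cc_even χ hχ1 a N (ha0 N)
  have hco : ∀ N, (cc χ a (2 * N + 1) : ℝ) = a N := fun N => cc_odd χ a N (ha0 N)
  refine ⟨cc χ a, ⟨⟨cc_c χ (chi_c _ _ T.comp_l T.comp_r) a hac, ?_, ?_⟩, ?_⟩, Or.inr ?_⟩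
  · intro s
    have : (0:ℝ) ≤ cc χ a s ∧ (cc χ a s : ℝ) ≤ 1 := by
      rcases Nat.even_or_odd' s with ⟨N, rfl | rfl⟩
      · rw [hce]
        have := hδ0 N; have := hδ1 N; have := hr0 N; have := hr1 N
        constructor <;> nlinarith
      · rw [hco]; exact ⟨hr0 N, hr1 N⟩
    exact ⟨by exact_mod_cast this.1, by exact_mod_cast this.2⟩
  · have hδt := hδs.tendsto_atTop_zero
    have h2 : Tendsto (fun s : ℕ => s / 2) atTop atTop :=
      tendsto_atTop_mono' _ (Eventually.of_forall fun s => le_rfl) (Nat.tendsto_div_const_atTop (by norm_num))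
    have h3 : Tendsto (fun s : ℕ => (a (s / 2) : ℝ)) atTop (nhds γ) := hlim.comp h2
    have h4 : Tendsto (fun s : ℕ => δ (s / 2)) atTop (nhds 0) := hδt.comp h2
    have h5 : Tendsto (fun s : ℕ => (cc χ a s : ℝ) - a (s / 2)) atTop (nhds 0) := by
      refine squeeze_zero_norm (fun s => ?_) h4
      rw [Real.norm_eq_abs]
      rcases Nat.even_or_odd' s with ⟨N, rfl | rfl⟩
      · rw [hce, show 2 * N / 2 = N by omega, abs_le]
        have := hδ0 N; have := hδ1 N; have := hr0 N; have := hr1 N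
        constructor <;> nlinarith
      · rw [hco, show (2 * N + 1) / 2 = N by omega]
        simpa using hδ0 N
    simpa using h5.add h3
  · apply summable_eo
    · refine Summable.of_nonneg_of_le (fun N => abs_nonneg _) (fun N => ?_) hδs
      rw [hce, hco, abs_le]
      have := hδ0 N; have := hδ1 N; have := hr0 N; have := hr1 N
      constructor <;> nlinarith
    · refine Summable.of_nonneg_of_le (fun N => abs_nonneg _) (fun N => ?_) (hvar.add ((summable_nat_add_iff 1).2 hδs))
      rw [show 2 * N + 1 + 1 = 2 * (N + 1) by ring, hce, hco]
      have e : (a (N + 1) : ℝ) * (1 - δ (N + 1)) - a N = (a (N + 1) - a N) + (- (a (N + 1) * δ (N + 1))) := by ring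
      rw [e]
      refine (abs_add_le _ _).trans ?_
      have h1 : |-((a (N + 1) : ℝ) * δ (N + 1))| ≤ δ (N + 1) := by
        rw [abs_neg, abs_of_nonneg (mul_nonneg (hr0 _) (hδ0 _))]
        exact mul_le_of_le_one_left (hδ0 _) (hr1 _)
      linarith
  · apply le_antisymm
    · refine EReal.le_of_forall_lt_iff_le.1 fun z hz => ?_
      have hz' : (0:ℝ) < z := by exact_mod_cast hz
      refine Filter.liminf_le_of_frequently_le' ?_
      rw [frequently_atTop]
      intro s0
      obtain ⟨N0, hN0⟩ := eventually_atTop.1 (hlim.eventually (lt_mem_nhds (half_lt_self hγ0)))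
      obtain ⟨m0, hm0⟩ := exists_nat_gt (2 / γ * (1 + 1 / z))
      set m := max m0 (s0 + N0 + 1) + 1 with hm
      obtain ⟨i, hi, hg⟩ := jump_exists T γ hγ0 hT m (by omega)
      obtain ⟨N, hN, hf, hd⟩ := stage_exists χ γ hγ0 hirr a ha0 hlim i
      have hNi : i ≤ N := hN ▸ Nat.unpair_left_le N
      have hmm := le_max_right m0 (s0 + N0 + 1)
      refine ⟨2 * N, by omega, ?_⟩
      rw [hce, hco]
      have hp : (0:ℝ) < 2 ^ i := by positivity
      have hmr : 2 / γ * (1 + 1 / z) < m := by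
        refine hm0.trans_le ?_
        exact_mod_cast (le_max_left m0 (s0 + N0 + 1)).trans (by omega)
      have hw : 1 + 1 / z < γ / 2 * m := by
        have := mul_lt_mul_of_pos_left hmr (half_pos hγ0)
        calc 1 + 1 / z = γ / 2 * (2 / γ * (1 + 1 / z)) := by field_simp
          _ < _ := this
      have hzz : 0 < 1 / z := by positivity
      have hb := ratio_bound γ (a N) (δ N) m (1 / 2 ^ i) hγ0 (by positivity) ?_ ?_ ?_ (by linarith)
      · have : |(γ - (a N : ℝ)) / (γ - a N * (1 - δ N))| ≤ z := by
          refine hb.trans ?_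
          rw [div_le_iff₀ (by linarith)]
          have : z * (1 / z) ≤ z * (γ / 2 * m - 1) := mul_le_mul_of_nonneg_left (by linarith) hz'.le
          rwa [mul_one_div_cancel hz'.ne'] at this
        exact_mod_cast this
      · rw [fl_eq _ _ (ha0 N)] at hf
        have h1 := Nat.floor_le (a := γ * 2 ^ i) (by positivity)
        have h2 := Nat.lt_floor_add_one (γ * 2 ^ i)
        have h3 := Nat.floor_le (a := (a N : ℝ) * 2 ^ i) (mul_nonneg (hr0 N) hp.le)
        have h4 := Nat.lt_floor_add_one ((a N : ℝ) * 2 ^ i)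
        rw [hf] at h3 h4
        rw [le_div_iff₀ hp, ← abs_of_pos hp, ← abs_mul, abs_le]
        constructor <;> nlinarith
      · exact (hN0 N (by omega)).le
      · simp only [hδ]
        rw [hN, hd, mul_one_div]
        gcongr
    · refine Filter.le_liminf_of_le (by isBoundedDefault) (Eventually.of_forall fun s => ?_)
      exact_mod_cast abs_nonneg _
end

section
/- Let a ≤ b be real numbers, let m ≥ 1 be a natural number, and let z_0, …, z_m and d_0, …, d_m be real numbers with associated intervals I_i = [z_i − d_i, z_i + d_i]. If d_i ≥ (b − a)/m for every 0 ≤ i ≤ m, and z_j ∉ I_i for all 0 ≤ i < j ≤ m, then there exists i ∈ {0, …, m} such that z_i ∉ [a, b]. -/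
theorem interval_escape (a b : ℝ) (hab : a ≤ b) (m : ℕ) (hm : 1 ≤ m)
    (z d : ℕ → ℝ)
    (hd : ∀ i, i ≤ m → (b - a) / (m : ℝ) ≤ d i)
    (hz : ∀ i j, i < j → j ≤ m → z j ∉ Set.Icc (z i - d i) (z i + d i)) :
    ∃ i, i ≤ m ∧ z i ∉ Set.Icc a b := by
  by_contra hcon
  push Not at hcon
  have hm0 : (0 : ℝ) < m := by exact_mod_cast hm
  obtain ⟨δ, hδ⟩ : ∃ δ, δ = (b - a) / (m : ℝ) := ⟨_, rfl⟩
  have hmδ : (m : ℝ) * δ = b - a := by rw [hδ]; field_simp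
  have hδ0 : 0 ≤ δ := by rw [hδ]; exact div_nonneg (by linarith) hm0.le
  rw [← hδ] at hd
  have key : ∀ i, ∃ k, i ≤ m → k < m ∧ a + k * δ ≤ z i ∧ z i ≤ a + (k + 1 : ℕ) * δ := by
    intro i
    by_cases hi : i ≤ m
    · obtain ⟨h1, h2⟩ := hcon i hi
      have hex : ∃ k : ℕ, z i ≤ a + (k + 1 : ℕ) * δ := by
        refine ⟨m - 1, ?_⟩
        rw [Nat.sub_add_cancel hm]; linarith
      classical
      refine ⟨Nat.find hex, fun _ => ⟨?_, ?_, Nat.find_spec hex⟩⟩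
      · have : Nat.find hex ≤ m - 1 := Nat.find_min' hex (by
          rw [Nat.sub_add_cancel hm]; linarith)
        omega
      · rcases hk : Nat.find hex with _ | k
        · simpa using h1
        · have := Nat.find_min hex (m := k) (by omega)
          exact (not_le.1 this).le
    · exact ⟨0, fun h => absurd h hi⟩
  choose f hf using key
  obtain ⟨i, hi, j, hj, hne, hij⟩ := Finset.exists_ne_map_eq_of_card_lt_of_maps_to
    (s := Finset.range (m + 1)) (t := Finset.range m) (by simp) (f := f)
    (by
      intro i hi
      simp only [Finset.coe_range, Set.mem_Iio] at hi ⊢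
      exact (hf i (by omega)).1)
  simp only [Finset.mem_range] at hi hj
  have main : ∀ i j, i < j → j ≤ m → f i = f j → False := by
    intro i j hlt hjm h
    obtain ⟨-, h1, h2⟩ := hf i (by omega)
    obtain ⟨-, h3, h4⟩ := hf j hjm
    have h5 := hd i (by omega)
    rw [← h] at h3 h4
    push_cast at *
    refine hz i j hlt hjm ⟨by linarith, by linarith⟩
  rcases lt_or_gt_of_ne hne with h | h
  · exact main i j h (by omega) hij
  · exact main j i h (by omega) hij.symm
end

section
/- Every two-sided computable approximation is speedable: if {a_s} is a computable approximation of a real α such that a_s < α for infinitely many s and a_s > α for infinitely many s, then {a_s} is ρ-speedable for some rational ρ ∈ [0,1). -/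
open Filter

namespace TwoSided

def Hm (h : ℕ → ℕ) (n : ℕ) : ℕ := Nat.rec (h 0) (fun y IH => max IH (h (y+1))) n

lemma le_Hm (h : ℕ → ℕ) {r s : ℕ} (hrs : r ≤ s) : h r ≤ Hm h s := by
  induction s with
  | zero => obtain rfl : r = 0 := by omega
            exact le_refl _
  | succ n ih =>
    change h r ≤ max (Hm h n) (h (n+1))
    rcases Nat.lt_or_ge n r with h1 | h1
    · obtain rfl : r = n+1 := by omega
      exact le_max_right _ _
    · exact (ih h1).trans (le_max_left _ _)

lemma Hm_eq (h : ℕ → ℕ) (s : ℕ) : ∃ r ≤ s, Hm h s = h r := by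
  induction s with
  | zero => exact ⟨0, le_refl _, rfl⟩
  | succ n ih =>
    obtain ⟨r, hr, he⟩ := ih
    change ∃ r ≤ n+1, max (Hm h n) (h (n+1)) = h r
    rcases le_total (Hm h n) (h (n+1)) with h1 | h1
    · exact ⟨n+1, le_refl _, max_eq_right h1⟩
    · exact ⟨r, by omega, by rw [max_eq_left h1, he]⟩

lemma Hm_mono (h : ℕ → ℕ) : Monotone (Hm h) :=
  monotone_nat_of_le_succ fun n => le_max_left (Hm h n) (h (n+1))

lemma F1 {x y z : ℝ} (hxy : 0 < x * y) (h1 : 9/10 * |x| < |y|) (h2 : 9/10 * |y| < |x|)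
    (hz : |2*z-x-y| ≤ 3*|x-y|) : 0 < z * x := by
  rcases pos_and_pos_or_neg_and_neg_of_mul_pos hxy with ⟨hx, hy⟩ | ⟨hx, hy⟩
  · rw [abs_of_pos hx, abs_of_pos hy] at *
    apply mul_pos _ hx
    rcases abs_cases (x-y) with h | h <;> rcases abs_cases (2*z-x-y) with h' | h' <;> linarith
  · rw [abs_of_neg hx, abs_of_neg hy] at *
    apply mul_pos_of_neg_of_neg _ hx
    rcases abs_cases (x-y) with h | h <;> rcases abs_cases (2*z-x-y) with h' | h' <;> linarith

lemma F2 {x y z : ℝ} (hxy : x * y < 0) (h1 : 9/10 * |x| < |y|) (h2 : 9/10 * |y| < |x|)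
    (hz : 2*|2*z-x-y| < |x-y|) : |z| ≤ 9/10*|x| := by
  rcases mul_neg_iff.1 hxy with ⟨hx, hy⟩ | ⟨hx, hy⟩
  · rw [abs_of_pos hx, abs_of_neg hy] at *
    rw [abs_of_pos (by linarith : 0 < x - y)] at hz
    rcases abs_cases z with h | h <;> rcases abs_cases (2*z-x-y) with h' | h' <;> linarith
  · rw [abs_of_neg hx, abs_of_pos hy] at *
    rw [abs_of_neg (by linarith : x - y < 0)] at hz
    rcases abs_cases z with h | h <;> rcases abs_cases (2*z-x-y) with h' | h' <;> linarith

lemma F3 {x y z : ℝ} (hxy : x * y < 0) (h1 : 9/10 * |x| < |y|) (h2 : 9/10 * |y| < |x|)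
    (hz : 3*|x-y| < |2*z-x-y|) : |x| ≤ 9/10*|z| := by
  rcases mul_neg_iff.1 hxy with ⟨hx, hy⟩ | ⟨hx, hy⟩
  · rw [abs_of_pos hx, abs_of_neg hy] at *
    rw [abs_of_pos (by linarith : 0 < x - y)] at hz
    rcases abs_cases z with h | h <;> rcases abs_cases (2*z-x-y) with h' | h' <;> linarith
  · rw [abs_of_neg hx, abs_of_pos hy] at *
    rw [abs_of_neg (by linarith : x - y < 0)] at hz
    rcases abs_cases z with h | h <;> rcases abs_cases (2*z-x-y) with h' | h' <;> linarith

def Stop (a : ℕ → ℝ) (s t : ℕ) : Prop :=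
  2*|2*a t-a s-a (s+1)| < |a s-a (s+1)| ∨ 3*|a s-a (s+1)| < |2*a t-a s-a (s+1)|

/-- here `x s = a s - α` -/
lemma exists_stop (x : ℕ → ℝ) (hx0 : ∀ s, x s ≠ 0) (hlim : Tendsto x atTop (nhds 0))
    (h1 : ∀ s, 9/10 * |x s| < |x (s+1)|) (h2 : ∀ s, 9/10 * |x (s+1)| < |x s|) (s : ℕ) :
    ∃ t, s + 1 < t ∧ Stop x s t := by
  have hl : Tendsto (fun t => |2*x t-x s-x (s+1)|) atTop (nhds |2*0-x s-x (s+1)|) :=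
    (((hlim.const_mul 2).sub_const _).sub_const _).abs
  have e1 := h1 s
  have e2 := h2 s
  rcases lt_or_gt_of_ne (mul_ne_zero (hx0 s) (hx0 (s+1))) with h | h
  · have : 2*|2*0-x s-x (s+1)| < |x s-x (s+1)| := by
      rcases mul_neg_iff.1 h with ⟨hx, hy⟩ | ⟨hx, hy⟩
      · rw [abs_of_pos hx, abs_of_neg hy] at *
        rw [abs_of_pos (by linarith : 0 < x s - x (s+1))]
        rcases abs_cases (2*0-x s-x (s+1)) with h' | h' <;> linarith
      · rw [abs_of_neg hx, abs_of_pos hy] at *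
        rw [abs_of_neg (by linarith : x s - x (s+1) < 0)]
        rcases abs_cases (2*0-x s-x (s+1)) with h' | h' <;> linarith
    obtain ⟨t, ht, ht'⟩ := (((hl.const_mul 2).eventually_lt_const this).and
      (eventually_gt_atTop (s+1))).exists
    exact ⟨t, ht', Or.inl ht⟩
  · have : 3*|x s-x (s+1)| < |2*0-x s-x (s+1)| := by
      rcases pos_and_pos_or_neg_and_neg_of_mul_pos h with ⟨hx, hy⟩ | ⟨hx, hy⟩
      · rw [abs_of_pos hx, abs_of_pos hy] at *
        rw [abs_of_neg (by linarith : 2*0-x s - x (s+1) < 0)]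
        rcases abs_cases (x s-x (s+1)) with h' | h' <;> linarith
      · rw [abs_of_neg hx, abs_of_neg hy] at *
        rw [abs_of_pos (by linarith : 0 < 2*0-x s - x (s+1))]
        rcases abs_cases (x s-x (s+1)) with h' | h' <;> linarith
    obtain ⟨t, ht, ht'⟩ := ((hl.eventually_const_lt this).and
      (eventually_gt_atTop (s+1))).exists
    exact ⟨t, ht', Or.inr ht⟩

lemma exists_cross (x : ℕ → ℝ) (hx0 : ∀ s, x s ≠ 0)
    (hleft : ∃ᶠ s in atTop, x s < 0) (hright : ∃ᶠ s in atTop, 0 < x s) (S : ℕ) :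
    ∃ s, S ≤ s ∧ x s * x (s+1) < 0 := by
  by_contra! hc
  have key : ∀ k, 0 < x S * x (S + k) := by
    intro k
    induction k with
    | zero => exact mul_self_pos.2 (hx0 S)
    | succ k ih =>
      have h1 : 0 < x (S+k) * x (S+k+1) :=
        lt_of_le_of_ne (hc (S+k) (by omega)) (mul_ne_zero (hx0 _) (hx0 _)).symm
      have h2 := mul_pos ih h1
      have h3 : 0 < x (S+k) * x (S+k) := mul_self_pos.2 (hx0 _)
      change 0 < x S * x (S+k+1)
      by_contra! h4
      nlinarith
  obtain ⟨p, hp, hp'⟩ := (hleft.and_eventually (eventually_ge_atTop S)).exists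
  obtain ⟨q, hq, hq'⟩ := (hright.and_eventually (eventually_ge_atTop S)).exists
  have k1 := key (p - S)
  have k2 := key (q - S)
  rw [Nat.add_sub_cancel' hp'] at k1
  rw [Nat.add_sub_cancel' hq'] at k2
  rcases lt_or_gt_of_ne (hx0 S) with h | h <;> nlinarith

lemma core (x : ℕ → ℝ) (hx0 : ∀ s, x s ≠ 0)
    (h1 : ∀ s, 9/10 * |x s| < |x (s+1)|) (h2 : ∀ s, 9/10 * |x (s+1)| < |x s|)
    (hleft : ∃ᶠ s in atTop, x s < 0) (hright : ∃ᶠ s in atTop, 0 < x s)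
    (h : ℕ → ℕ) (hgt : ∀ s, s + 1 < h s) (hStp : ∀ s, Stop x s (h s))
    (hmin : ∀ s t, s + 1 < t → t < h s → ¬ Stop x s t)
    (G : ℕ → ℕ) (hG : ∀ t, t ≤ Hm h (G t)) (hGmin : ∀ t r, t ≤ Hm h r → G t ≤ r)
    (S : ℕ) (k1 : ∀ s, S ≤ s → 9/10 * |x s| < |x (Hm h s)|)
    (k2 : ∀ s, S ≤ s → 9/10 * |x s| < |x (G s)|) : False := by
  obtain ⟨s, hs, hcr⟩ := exists_cross x hx0 hleft hright (Hm h S)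
  classical
  have hex : ∃ r, h s ≤ h r := ⟨s, le_refl _⟩
  obtain ⟨r, hr, hrmin⟩ : ∃ r, h s ≤ h r ∧ ∀ m, m < r → h m < h s :=
    ⟨Nat.find hex, Nat.find_spec hex, fun m hm => not_le.1 (Nat.find_min hex hm)⟩
  have hrs : r ≤ s := by
    by_contra! hc
    exact lt_irrefl _ (hrmin s hc)
  have hSr : S < r := by
    by_contra! hc
    have := le_Hm h hc
    have := hgt s
    omega
  have hHr : Hm h r = h r := by
    obtain ⟨r', hr', he⟩ := Hm_eq h r
    rcases Nat.lt_or_ge r' r with hlt | hge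
    · have := hrmin r' hlt
      have := le_Hm h (le_refl r)
      omega
    · obtain rfl : r' = r := by omega
      exact he
  have hGr : G (h r) = r := by
    have hle := hGmin (h r) r hHr.ge
    rcases Nat.lt_or_ge (G (h r)) r with hlt | hge
    · obtain ⟨r', hr', he⟩ := Hm_eq h (G (h r))
      have := hrmin r' (by omega)
      have := hG (h r)
      omega
    · omega
  have hcrr : x r * x (r+1) < 0 := by
    rcases lt_or_gt_of_ne (mul_ne_zero (hx0 r) (hx0 (r+1))) with hh | hh
    · exact hh
    exfalso
    have sgn : ∀ t, r ≤ t → t < h r → 0 < x t * x r := by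
      intro t ht ht'
      rcases Nat.lt_or_ge (r+1) t with hlt | hge
      · have := hmin r t hlt ht'
        unfold Stop at this
        push Not at this
        exact F1 hh (h1 r) (h2 r) this.2
      · rcases Nat.lt_or_ge r t with hlt | hge'
        · obtain rfl : t = r + 1 := by omega
          linarith [mul_comm (x r) (x (r+1))]
        · obtain rfl : t = r := by omega
          exact mul_self_pos.2 (hx0 _)
    have := hgt s
    have p1 := sgn s hrs (by omega)
    have p2 := sgn (s+1) (by omega) (by omega)
    have p3 := mul_pos p1 p2
    have p4 : 0 < x r * x r := mul_self_pos.2 (hx0 _)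
    nlinarith
  have a1 := k1 r hSr.le
  have a2 := k2 (h r) (by have := hgt r; omega)
  rw [hHr] at a1
  rw [hGr] at a2
  rcases hStp r with h' | h'
  · exact absurd (F2 hcrr (h1 r) (h2 r) h') (not_le.2 a1)
  · exact absurd (F3 hcrr (h1 r) (h2 r) h') (not_le.2 a2)

lemma comp_find {β : Type*} [Primcodable β] {p : β → ℕ → Bool} (hp : Computable₂ p)
    (h : ∀ b, ∃ n, p b n = true) : Computable (fun b => Nat.find (h b)) := by
  have h1 : Partrec fun b => Nat.rfind (fun n => Part.some (p b n)) :=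
    Partrec.rfind (p := fun b n => Part.some (p b n)) hp
  refine h1.of_eq fun b => ?_
  change _ = Part.some (Nat.find (h b))
  rw [Part.eq_some_iff]
  refine Nat.mem_rfind.2 ⟨?_, fun {m} hm => ?_⟩
  · simpa using (Nat.find_spec (h b)).symm
  · simpa using Nat.find_min (h b) hm

def codeAbs (m : ℕ) : ℕ := m / 2 + m % 2

def enc1 (q : ℚ) : ℕ := Nat.pair (@Encodable.encode ℤ Int.encodable q.num) q.den

lemma enc1_eq (q : ℚ) : enc1 q = @Encodable.encode ℚ Rat.instEncodable q := rfl

lemma codeAbs_encode (z : ℤ) : codeAbs (@Encodable.encode ℤ Int.encodable z) = z.natAbs := by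
  cases z with
  | ofNat n =>
    change codeAbs (2 * n) = n
    unfold codeAbs; omega
  | negSucc n =>
    change codeAbs (2 * n + 1) = n + 1
    unfold codeAbs; omega

abbrev SS : Set ℕ := Set.range (@Encodable.encode ℚ Rat.instEncodable)

lemma mem_SS (m : ℕ) : m ∈ SS ↔ 0 < m.unpair.2 ∧
    ∀ k < m + 1, k ∣ codeAbs m.unpair.1 → k ∣ m.unpair.2 → k ≤ 1 := by
  have hcop : (0 < m.unpair.2 ∧
    ∀ k < m + 1, k ∣ codeAbs m.unpair.1 → k ∣ m.unpair.2 → k ≤ 1) ↔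
     (0 < m.unpair.2 ∧ (codeAbs m.unpair.1).Coprime m.unpair.2) := by
    refine and_congr_right fun hpos => ⟨fun hh => ?_, fun hh k _ hk1 hk2 => ?_⟩
    · have h1 := hh (Nat.gcd (codeAbs m.unpair.1) m.unpair.2) ?_ (Nat.gcd_dvd_left _ _)
        (Nat.gcd_dvd_right _ _)
      · have := Nat.gcd_pos_of_pos_right (codeAbs m.unpair.1) hpos
        unfold Nat.Coprime
        omega
      · have := Nat.gcd_le_right (codeAbs m.unpair.1) hpos
        have := Nat.unpair_right_le m
        omega
    · have := Nat.dvd_gcd hk1 hk2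
      rw [hh] at this
      exact Nat.le_of_dvd one_pos this
  rw [hcop]
  constructor
  · rintro ⟨q, rfl⟩
    rw [← enc1_eq]
    unfold enc1
    rw [Nat.unpair_pair]
    simp only [codeAbs_encode]
    exact ⟨q.den_pos, q.reduced⟩
  · rintro ⟨hp, hc⟩
    obtain ⟨z, hz⟩ : ∃ z : ℤ, @Encodable.encode ℤ Int.encodable z = m.unpair.1 :=
      ⟨Equiv.intEquivNat.symm m.unpair.1, Equiv.intEquivNat.apply_symm_apply _⟩
    rw [← hz, codeAbs_encode] at hc
    refine ⟨⟨z, m.unpair.2, hp.ne', hc⟩, ?_⟩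
    rw [← enc1_eq]
    unfold enc1
    simp only [hz, Nat.pair_unpair]

lemma primrec_codeAbs : Primrec codeAbs :=
  Primrec.nat_add.comp (Primrec.nat_div.comp .id (.const 2)) (Primrec.nat_mod.comp .id (.const 2))

lemma primrecPred_SS : PrimrecPred (fun m => m ∈ SS) := by
  have h2 : Primrec fun m : ℕ => m.unpair.2 := Primrec.snd.comp Primrec.unpair
  have h1 : Primrec fun m : ℕ => codeAbs m.unpair.1 :=
    primrec_codeAbs.comp (Primrec.fst.comp Primrec.unpair)
  have hR : PrimrecRel (fun k m : ℕ => m.unpair.2 % k = 0 → codeAbs m.unpair.1 % k = 0 → k ≤ 1) := by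
    have e1 : PrimrecPred fun p : ℕ × ℕ => p.2.unpair.2 % p.1 = 0 :=
      Primrec.eq.comp (Primrec.nat_mod.comp (h2.comp .snd) .fst) (.const 0)
    have e2 : PrimrecPred fun p : ℕ × ℕ => codeAbs p.2.unpair.1 % p.1 = 0 :=
      Primrec.eq.comp (Primrec.nat_mod.comp (h1.comp .snd) .fst) (.const 0)
    have e3 : PrimrecPred fun p : ℕ × ℕ => p.1 ≤ 1 := Primrec.nat_le.comp .fst (.const 1)
    have e4 : PrimrecPred fun p : ℕ × ℕ =>
        p.2.unpair.2 % p.1 = 0 → codeAbs p.2.unpair.1 % p.1 = 0 → p.1 ≤ 1 :=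
      (e1.not.or (e2.not.or e3)).of_eq fun p => by tauto
    exact e4
  have hF := (PrimrecRel.forall_lt hR).comp Primrec.succ Primrec.id
  have hP : PrimrecPred fun m : ℕ => 0 < m.unpair.2 := Primrec.nat_lt.comp (.const 0) h2
  refine (hP.and hF).of_eq fun m => ?_
  rw [mem_SS]
  refine and_congr_right fun _ => forall_congr' fun k => ?_
  simp only [Nat.dvd_iff_mod_eq_zero, Nat.succ_eq_add_one, id]
  tauto

lemma computable_enc1 : Computable enc1 := by
  let : DecidablePred (· ∈ SS) := @Encodable.decidableRangeEncode ℚ Rat.instEncodable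
  let : Infinite SS :=
    Infinite.of_injective _ (Equiv.ofInjective _ (@Encodable.encode_injective ℚ Rat.instEncodable)).injective
  have hex : ∀ x : ℕ, ∃ m, decide (x + m + 1 ∈ SS) = true := by
    intro x
    obtain ⟨y, hy, hxy⟩ := (Set.infinite_coe_iff.1 ‹Infinite SS›).exists_gt x
    exact ⟨y - x - 1, by rw [decide_eq_true_iff]; convert hy using 1; omega⟩
  have hdec : Computable fun m : ℕ => decide (m ∈ SS) := primrecPred_SS.decide.to_comp
  have hp : Computable₂ fun x m : ℕ => decide (x + m + 1 ∈ SS) :=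
    hdec.comp (Primrec.succ.comp Primrec.nat_add).to_comp
  have hstep : Computable fun x : ℕ => x + Nat.find (hex x) + 1 :=
    Computable.succ.comp (Primrec.nat_add.to_comp.comp Computable.id (comp_find hp hex))
  have hof : Computable fun n : ℕ => ((Nat.Subtype.ofNat SS n : SS) : ℕ) := by
    refine (Computable.nat_rec (f := fun n : ℕ => n) (g := fun _ => ((⊥ : SS) : ℕ))
      (h := fun _ p => p.2 + Nat.find (hex p.2) + 1) Computable.id (Computable.const _)
      (hstep.comp (Computable.snd.comp Computable.snd))).of_eq fun n => ?_
    induction n with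
    | zero => rfl
    | succ n ih =>
      have hs : ∀ (y : SS) (k : ℕ), k = (y : ℕ) →
          k + Nat.find (hex k) + 1 = ((Nat.Subtype.succ y : SS) : ℕ) := by
        rintro y k rfl
        simp only [decide_eq_true_eq]
        rfl
      exact hs _ _ ih
  refine (hof.comp (Computable.encode (α := ℚ))).of_eq fun q => ?_
  have key : ∀ n, @Encodable.encode ℚ Rat.instEncodable (Denumerable.ofNat ℚ n) =
    ((Nat.Subtype.ofNat SS n : SS) : ℕ) := by
    intro n
    let e := @Encodable.equivRangeEncode ℚ Rat.instEncodable
    have h1 : Denumerable.ofNat ℚ n = e.symm (Nat.Subtype.ofNat SS n) := rfl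
    rw [h1]
    exact congrArg Subtype.val (e.apply_symm_apply (Nat.Subtype.ofNat SS n))
  rw [← key]
  rw [enc1_eq]
  exact congrArg _ (Denumerable.ofNat_encode q)

def ndist (x y : ℕ) : ℕ := (x - y) + (y - x)

lemma ndist_cast (x y : ℕ) : ((ndist x y : ℕ) : ℝ) = |(x : ℝ) - y| := by
  unfold ndist
  rcases le_total x y with h | h
  · rw [Nat.sub_eq_zero_of_le h, zero_add, Nat.cast_sub h, abs_sub_comm, abs_of_nonneg]
    exact sub_nonneg.2 (by exact_mod_cast h)
  · rw [Nat.sub_eq_zero_of_le h, add_zero, Nat.cast_sub h, abs_of_nonneg]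
    exact sub_nonneg.2 (by exact_mod_cast h)

def stopNat (x y z : ℕ) : Bool :=
  decide (2 * ndist (2 * z) (x + y) < ndist x y) || decide (3 * ndist x y < ndist (2 * z) (x + y))

lemma primrec_ndist : Primrec₂ ndist :=
  Primrec.nat_add.comp₂ Primrec.nat_sub (Primrec.nat_sub.comp₂ Primrec₂.right Primrec₂.left)

lemma primrec_stopNat : Primrec fun p : ℕ × ℕ × ℕ => stopNat p.1 p.2.1 p.2.2 := by
  have x : Primrec fun p : ℕ × ℕ × ℕ => p.1 := .fst
  have y : Primrec fun p : ℕ × ℕ × ℕ => p.2.1 := Primrec.fst.comp .snd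
  have z : Primrec fun p : ℕ × ℕ × ℕ => p.2.2 := Primrec.snd.comp .snd
  have g : Primrec fun p : ℕ × ℕ × ℕ => ndist p.1 p.2.1 := primrec_ndist.comp x y
  have w : Primrec fun p : ℕ × ℕ × ℕ => ndist (2 * p.2.2) (p.1 + p.2.1) :=
    primrec_ndist.comp (Primrec.nat_mul.comp (.const 2) z) (Primrec.nat_add.comp x y)
  have A : PrimrecPred fun p : ℕ × ℕ × ℕ =>
      2 * ndist (2 * p.2.2) (p.1 + p.2.1) < ndist p.1 p.2.1 :=
    Primrec.nat_lt.comp (Primrec.nat_mul.comp (.const 2) w) g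
  have B : PrimrecPred fun p : ℕ × ℕ × ℕ =>
      3 * ndist p.1 p.2.1 < ndist (2 * p.2.2) (p.1 + p.2.1) :=
    Primrec.nat_lt.comp (Primrec.nat_mul.comp (.const 3) g) w
  exact Primrec.or.comp A.decide B.decide

def nu (q : ℚ) : ℕ := q.num.natAbs

lemma computable_nu : Computable nu := by
  have h : Primrec fun m : ℕ => codeAbs m.unpair.1 :=
    primrec_codeAbs.comp (Primrec.fst.comp Primrec.unpair)
  refine (h.to_comp.comp computable_enc1).of_eq fun q => ?_
  simp only [enc1, Nat.unpair_pair, codeAbs_encode, nu]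

lemma computable_den : Computable (fun q : ℚ => q.den) := by
  have h : Primrec fun m : ℕ => m.unpair.2 := Primrec.snd.comp Primrec.unpair
  refine (h.to_comp.comp computable_enc1).of_eq fun q => ?_
  simp only [enc1, Nat.unpair_pair]

def stopQ (x y z : ℚ) : Bool :=
  stopNat (nu x * (y.den * z.den)) (nu y * (x.den * z.den)) (nu z * (x.den * y.den))

lemma nu_cast {q : ℚ} (hq : 0 ≤ q) : (nu q : ℝ) = (q : ℝ) * q.den := by
  have h1 : ((nu q : ℤ)) = q.num := by
    unfold nu
    exact Int.natAbs_of_nonneg (Rat.num_nonneg.2 hq)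
  have h2 : (nu q : ℚ) = q * q.den := by
    rw [Rat.mul_den_eq_num, ← h1]; simp
  exact_mod_cast congrArg (fun r : ℚ => (r : ℝ)) h2

lemma stopQ_iff {x y z : ℚ} (hx : 0 ≤ x) (hy : 0 ≤ y) (hz : 0 ≤ z) : stopQ x y z = true ↔
    (2*|2*(z:ℝ)-x-y| < |(x:ℝ)-y| ∨ 3*|(x:ℝ)-y| < |2*(z:ℝ)-x-y|) := by
  unfold stopQ stopNat
  rw [Bool.or_eq_true, decide_eq_true_iff, decide_eq_true_iff]
  set K : ℝ := (x.den : ℝ) * y.den * z.den with hK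
  have hKpos : 0 < K := by
    have := x.den_pos; have := y.den_pos; have := z.den_pos; positivity
  rw [← Nat.cast_lt (α := ℝ), ← Nat.cast_lt (α := ℝ)]
  simp only [Nat.cast_mul, ndist_cast, Nat.cast_add, nu_cast hx, nu_cast hy, nu_cast hz, Nat.cast_ofNat]
  have e1 : (x:ℝ) * x.den * (y.den * z.den) - y * y.den * (x.den * z.den) = K * (x - y) := by
    rw [hK]; ring
  have e2 : 2 * ((z:ℝ) * z.den * (x.den * y.den)) -
      (x * x.den * (y.den * z.den) + y * y.den * (x.den * z.den)) = K * (2*z-x-y) := by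
    rw [hK]; ring
  clear_value K
  rw [e1, e2, abs_mul, abs_mul, abs_of_pos hKpos, mul_left_comm, mul_left_comm 3,
    mul_lt_mul_iff_right₀ hKpos, mul_lt_mul_iff_right₀ hKpos]

lemma computable_stop {a : ℕ → ℚ} (ha : Computable a) :
    Computable₂ fun s t : ℕ => decide (s + 1 < t) && stopQ (a s) (a (s+1)) (a t) := by
  have s0 : Computable fun p : ℕ × ℕ => p.1 := .fst
  have s1 : Computable fun p : ℕ × ℕ => p.1 + 1 := Computable.succ.comp .fst
  have t0 : Computable fun p : ℕ × ℕ => p.2 := .snd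
  have c0 : PrimrecPred fun p : ℕ × ℕ => p.1 + 1 < p.2 :=
    Primrec.nat_lt.comp (Primrec.succ.comp .fst) .snd
  have m := Primrec.nat_mul.to_comp
  have N : ∀ {f : ℕ × ℕ → ℕ}, Computable f → Computable fun p => nu (a (f p)) :=
    fun hf => computable_nu.comp (ha.comp hf)
  have D : ∀ {f : ℕ × ℕ → ℕ}, Computable f → Computable fun p => (a (f p)).den :=
    fun hf => computable_den.comp (ha.comp hf)
  have X := m.comp (N s0) (m.comp (D s1) (D t0))
  have Y := m.comp (N s1) (m.comp (D s0) (D t0))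
  have Z := m.comp (N t0) (m.comp (D s0) (D s1))
  have T := X.pair (Y.pair Z)
  have hS : Computable fun p : ℕ × ℕ => stopQ (a p.1) (a (p.1+1)) (a p.2) := by
    refine (primrec_stopNat.to_comp.comp T).of_eq fun p => ?_
    simp only [stopQ]
  have c1 : Computable fun p : ℕ × ℕ => decide (p.1 + 1 < p.2) := c0.decide.to_comp
  have R : Computable fun p : ℕ × ℕ =>
      (decide (p.1 + 1 < p.2) && stopQ (a p.1) (a (p.1+1)) (a p.2)) :=
    Computable₂.comp (f := and) Primrec.and.to_comp c1 hS
  exact R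

lemma computable_Hm {h : ℕ → ℕ} (hh : Computable h) : Computable (Hm h) :=
  Computable.nat_rec (f := fun n : ℕ => n) (g := fun _ => h 0)
    (h := fun _ p => max p.2 (h (p.1+1))) Computable.id (Computable.const _)
    (Primrec.nat_max.to_comp.comp (Computable.snd.comp Computable.snd)
      (hh.comp (Computable.succ.comp (Computable.fst.comp Computable.snd))))

/-- The property expressing that no computable order speeds up. -/
def NoSpeed (x : ℕ → ℝ) : Prop :=
  ∀ f, IsComputableOrder f → ∀ᶠ s in atTop, 9/10 * |x s| < |x (f s)|

lemma noSpeed_shift {x : ℕ → ℝ} (hx : NoSpeed x) (k : ℕ) : NoSpeed (fun s => x (s + k)) := by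
  rintro f ⟨fc, fm, ft⟩
  have := hx (fun s => f (s - k) + k) ⟨?_, ?_, ?_⟩
  · filter_upwards [(tendsto_add_atTop_nat k).eventually this] with s hs
    simpa using hs
  · exact Primrec.nat_add.to_comp.comp (fc.comp
      (Primrec.nat_sub.to_comp.comp Computable.id (Computable.const k))) (Computable.const k)
  · intro s t hst
    exact Nat.add_le_add_right (fm (Nat.sub_le_sub_right hst k)) k
  · exact (tendsto_add_atTop_nat k).comp (ft.comp (tendsto_sub_atTop_nat k))

lemma main_false (α : ℝ) (a : ℕ → ℚ) (hc : Computable a) (hnn : ∀ s, 0 ≤ a s)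
    (hx0 : ∀ s, (a s : ℝ) - α ≠ 0)
    (hlim : Tendsto (fun s => (a s : ℝ) - α) atTop (nhds 0))
    (hleft : ∃ᶠ s in atTop, (a s : ℝ) - α < 0) (hright : ∃ᶠ s in atTop, 0 < (a s : ℝ) - α)
    (h1 : ∀ s, 9/10 * |(a s : ℝ) - α| < |(a (s+1) : ℝ) - α|)
    (h2 : ∀ s, 9/10 * |(a (s+1) : ℝ) - α| < |(a s : ℝ) - α|)
    (hns : NoSpeed (fun s => (a s : ℝ) - α)) : False := by
  set x : ℕ → ℝ := fun s => (a s : ℝ) - α with hx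
  have hst : ∀ s t, stopQ (a s) (a (s+1)) (a t) = true ↔ Stop x s t := by
    intro s t
    rw [stopQ_iff (hnn _) (hnn _) (hnn _)]
    unfold Stop
    have e1 : x s - x (s+1) = (a s : ℝ) - a (s+1) := by simp only [hx]; ring
    have e2 : 2 * x t - x s - x (s+1) = 2 * (a t : ℝ) - a s - a (s+1) := by simp only [hx]; ring
    rw [e1, e2]
  have hex : ∀ s, ∃ t, (decide (s + 1 < t) && stopQ (a s) (a (s+1)) (a t)) = true := by
    intro s
    obtain ⟨t, ht, ht'⟩ := exists_stop x hx0 hlim h1 h2 s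
    exact ⟨t, by rw [Bool.and_eq_true, decide_eq_true_iff, hst]; exact ⟨ht, ht'⟩⟩
  obtain ⟨h, hcomp, hspec, hmin⟩ : ∃ h : ℕ → ℕ, Computable h ∧
      (∀ s, s + 1 < h s ∧ Stop x s (h s)) ∧
      (∀ s t, s + 1 < t → t < h s → ¬ Stop x s t) := by
    refine ⟨fun s => Nat.find (hex s), comp_find (computable_stop hc) hex, fun s => ?_,
      fun s t ht htl hS => ?_⟩
    · have := Nat.find_spec (hex s)
      rwa [Bool.and_eq_true, decide_eq_true_iff, hst] at this
    · apply Nat.find_min (hex s) htl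
      rw [Bool.and_eq_true, decide_eq_true_iff, hst]
      exact ⟨ht, hS⟩
  have hHge : ∀ s, s ≤ Hm h s := fun s => by
    have := le_Hm h (le_refl s)
    have := (hspec s).1
    omega
  have hHc := computable_Hm hcomp
  have hexG : ∀ t, ∃ r, decide (t ≤ Hm h r) = true := fun t => ⟨t, by simpa using hHge t⟩
  obtain ⟨G, hGc, hG, hGmin⟩ : ∃ G : ℕ → ℕ, Computable G ∧ (∀ t, t ≤ Hm h (G t)) ∧
      (∀ t r, t ≤ Hm h r → G t ≤ r) := by
    refine ⟨fun t => Nat.find (hexG t), comp_find ?_ hexG, fun t => ?_, fun t r hr => ?_⟩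
    · exact Primrec.nat_le.decide.to_comp.comp Computable.fst (hHc.comp Computable.snd)
    · simpa using Nat.find_spec (hexG t)
    · exact Nat.find_min' _ (by simpa using hr)
  have hGm : Monotone G := fun s t hst' => hGmin s _ (hst'.trans (hG t))
  have hGt : Tendsto G atTop atTop := by
    refine tendsto_atTop_atTop_of_monotone hGm fun b => ⟨Hm h b + 1, ?_⟩
    by_contra! hlt
    have := Hm_mono h hlt.le
    have := hG (Hm h b + 1)
    omega
  have A := hns (Hm h) ⟨hHc, Hm_mono h, tendsto_atTop_mono hHge tendsto_id⟩
  have B := hns G ⟨hGc, hGm, hGt⟩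
  obtain ⟨S, hS⟩ := eventually_atTop.1 (A.and B)
  exact core x hx0 h1 h2 hleft hright h (fun s => (hspec s).1) (fun s => (hspec s).2) hmin G hG hGmin
    S (fun s hs => (hS s hs).1) (fun s hs => (hS s hs).2)

end TwoSided

theorem two_sided_approx_speedable (α : ℝ) (hα : α ∈ Set.Ioo (0 : ℝ) 1)
    (a : ℕ → ℚ) (ha : IsCompApprox a α)
    (hleft : ∃ᶠ s in atTop, (a s : ℝ) < α)
    (hright : ∃ᶠ s in atTop, α < (a s : ℝ)) :
    IsSpeedable a α := by

  obtain ⟨hc, hI, hlim⟩ := ha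
  refine ⟨9/10, by norm_num, by norm_num, ?_⟩
  by_contra hno
  unfold IsRhoSpeedable at hno
  push Not at hno
  obtain ⟨hirr, hf⟩ := hno
  have hx0 : ∀ s, (a s : ℝ) - α ≠ 0 := fun s h => hirr (a s) (sub_eq_zero.1 h).symm
  have hns : TwoSided.NoSpeed (fun s => (a s : ℝ) - α) := by
    intro f hfo
    have h1 := hf f hfo
    unfold speedLiminf at h1
    filter_upwards [eventually_lt_of_lt_liminf h1] with s hs
    rw [EReal.coe_lt_coe_iff, abs_div, lt_div_iff₀ (abs_pos.2 (by
      rw [← neg_sub]; exact neg_ne_zero.2 (hx0 s))), abs_sub_comm α, abs_sub_comm α] at hs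
    push_cast at hs
    exact hs
  have p1 := hns (fun s => s + 1) ⟨Computable.succ, fun _ _ h => Nat.succ_le_succ h,
    tendsto_add_atTop_nat 1⟩
  have p2 := hns (fun s => s - 1) ⟨Primrec.pred.to_comp, fun _ _ h => Nat.sub_le_sub_right h 1,
    tendsto_sub_atTop_nat 1⟩
  obtain ⟨k, hk⟩ := eventually_atTop.1 (p1.and p2)
  have hfreq : ∀ {P : ℕ → Prop}, (∃ᶠ s in atTop, P s) → ∃ᶠ s in atTop, P (s + k) := by
    intro P hP
    rw [frequently_atTop] at hP ⊢
    intro n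
    obtain ⟨b, hb, hPb⟩ := hP (n + k)
    exact ⟨b - k, by omega, by rwa [Nat.sub_add_cancel (by omega)]⟩
  refine TwoSided.main_false α (fun s => a (s + k)) ?_ (fun s => (hI _).1) (fun s => hx0 _) ?_
    ?_ ?_ ?_ ?_ (TwoSided.noSpeed_shift hns k)
  · exact hc.comp (Primrec.nat_add.to_comp.comp Computable.id (Computable.const k))
  · have := (hlim.sub_const α).comp (tendsto_add_atTop_nat k)
    rw [sub_self] at this
    exact this
  · exact (hfreq hleft).mono fun s hs => sub_neg.2 hs
  · exact (hfreq hright).mono fun s hs => sub_pos.2 hs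
  · intro s
    have := (hk (s + k) (by omega)).1
    rwa [show s + 1 + k = s + k + 1 by omega]
  · intro s
    have := (hk (s + 1 + k) (by omega)).2
    rwa [show s + 1 + k - 1 = s + k by omega] at this
end
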